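/- arXiv:1905.13165 — 3 statements merged into one kernel-verified Lean document; each statement's English description precedes it below -/
import Mathlib

section
/- For all k,v,h ∈ ℕ with v+h ≤ k, setting n := k−v−h, one has D_{k,v,h} = Σ_{j=0}^{n} (−1)^j (2n−2j−1)!! · ρ_j(k,v,h). -/
/-!
The identity is inclusion–exclusion over the dominoes of a configuration.

A triple `(V, H, M)` counted by `rho j k v h` is a matching with `v + h + j` edges, and a matching
with `i` edges extends to exactly `(2 * (k - i) - 1)!!` configurations
(`card_perfectMatchings_superset_eq_df`). Hence `df (k - v - h - j) * rho j k v h` counts the pairs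
of a triple and a configuration `P` containing `V ∪ H ∪ M`. Counting these pairs by `P` instead, a
configuration with `a` vertical and `b` horizontal dominoes contributes
`a.choose v * b.choose h * (a + b - v - h).choose j` (`df_mul_rho`). The alternating sum over `j`
of the last factor vanishes unless `a + b ≤ v + h`, and then the first two factors vanish unless
`a = v` and `b = h` (`alternating_sum_choose`); what remains is the number of configurations with
exactly `v` vertical and `h` horizontal dominoes.
-/

/-- A cell of the `2 × k` array. -/
abbrev Cell (k : ℕ) := Fin 2 × Fin k

/-- `P` is a partition of the cells of the `2 × k` array into (unordered) pairs,
i.e., a configuration of the `2 × k` game of memory (with indistinguishable pairs). -/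
def IsPairPartition {k : ℕ} (P : Finset (Finset (Cell k))) : Prop :=
  (∀ p ∈ P, p.card = 2) ∧ (∀ p ∈ P, ∀ q ∈ P, p ≠ q → p ∩ q = ∅) ∧
    (∀ x : Cell k, ∃ p ∈ P, x ∈ p)

/-- `p` is a vertical cell-pair (vertical domino position). -/
def IsVert {k : ℕ} (p : Finset (Cell k)) : Prop :=
  ∃ j : Fin k, p = {((0 : Fin 2), j), ((1 : Fin 2), j)}

/-- `p` is a horizontal cell-pair (horizontal domino position). -/
def IsHoriz {k : ℕ} (p : Finset (Cell k)) : Prop :=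
  ∃ (i : Fin 2) (j j' : Fin k), (j' : ℕ) = (j : ℕ) + 1 ∧ p = {(i, j), (i, j')}

/-- An edge of the `2 × k` grid graph (two cells agreeing in one coordinate and
differing by exactly 1 in the other) is exactly a vertical or horizontal cell-pair. -/
def IsGridEdge {k : ℕ} (e : Finset (Cell k)) : Prop := IsVert e ∨ IsHoriz e

open scoped Classical in
/-- `D k v h`: the number of configurations of the `2 × k` game of memory having
exactly `v` vertical and exactly `h` horizontal dominoes. -/
noncomputable def D (k v h : ℕ) : ℕ :=
  (Finset.univ.filter fun P : Finset (Finset (Cell k)) =>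
    IsPairPartition P ∧ (P.filter fun p => IsVert p).card = v ∧
      (P.filter fun p => IsHoriz p).card = h).card

open scoped Classical in
/-- `rho j k v h`: the sum, over all choices of a set `V` of `v` vertical cell-pairs
and a set `H` of `h` horizontal cell-pairs such that the chosen pairs are pairwise
disjoint, of the number of `j`-edge matchings of the subgraph of the `2 × k` grid
graph induced on the cells not belonging to any chosen pair.
(Counted as triples `(V, H, M)`.) -/
noncomputable def rho (j k v h : ℕ) : ℕ :=
  (Finset.univ.filter fun T :
      Finset (Finset (Cell k)) × Finset (Finset (Cell k)) × Finset (Finset (Cell k)) =>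
    (∀ p ∈ T.1, IsVert p) ∧ T.1.card = v ∧
    (∀ p ∈ T.2.1, IsHoriz p) ∧ T.2.1.card = h ∧
    (∀ p ∈ T.1 ∪ T.2.1, ∀ q ∈ T.1 ∪ T.2.1, p ≠ q → p ∩ q = ∅) ∧
    (∀ e ∈ T.2.2, IsGridEdge e) ∧ T.2.2.card = j ∧
    (∀ e ∈ T.2.2, ∀ f ∈ T.2.2, e ≠ f → e ∩ f = ∅) ∧
    (∀ e ∈ T.2.2, ∀ p ∈ T.1 ∪ T.2.1, e ∩ p = ∅)).card

/-- `df n` is the double factorial `(2n-1)!! = (2n)! / (2^n n!)`, with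
`df 0 = (-1)!! = 1`. -/
def df (n : ℕ) : ℕ := (2 * n).factorial / (2 ^ n * n.factorial)

/-! ### Pair partitions of a finite set -/

section PairPartitions

variable {α : Type*} [Fintype α] [DecidableEq α]

/-- A set of pairwise disjoint two-element subsets of `S`: a matching of the complete graph
on `S`. -/
def IsPartialMatching (S : Finset α) (Q : Finset (Finset α)) : Prop :=
  (∀ p ∈ Q, p.card = 2) ∧ (∀ p ∈ Q, p ⊆ S) ∧ (∀ p ∈ Q, ∀ q ∈ Q, p ≠ q → p ∩ q = ∅)

/-- A partition of `S` into pairs: a perfect matching of the complete graph on `S`. -/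
def IsPerfectMatching (S : Finset α) (P : Finset (Finset α)) : Prop :=
  IsPartialMatching S P ∧ ∀ x ∈ S, ∃ p ∈ P, x ∈ p

open scoped Classical in
/-- The finset of all partitions of `S` into pairs. -/
noncomputable def perfectMatchings (S : Finset α) : Finset (Finset (Finset α)) :=
  Finset.univ.filter fun P => IsPerfectMatching S P

theorem mem_perfectMatchings {S : Finset α} {P : Finset (Finset α)} :
    P ∈ perfectMatchings S ↔ IsPerfectMatching S P := by
  simp [perfectMatchings]

theorem IsPartialMatching.card_biUnion {S : Finset α} {Q : Finset (Finset α)}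
    (hQ : IsPartialMatching S Q) : (Q.biUnion id).card = 2 * Q.card := by
  rw [Finset.card_biUnion]
  · rw [Finset.sum_congr rfl (fun p hp => by simpa using hQ.1 p hp), Finset.sum_const,
      smul_eq_mul, mul_comm]
  · intro p hp q hq hpq
    exact Finset.disjoint_iff_inter_eq_empty.2 (hQ.2.2 p hp q hq hpq)

theorem IsPartialMatching.biUnion_subset {S : Finset α} {Q : Finset (Finset α)}
    (hQ : IsPartialMatching S Q) : Q.biUnion id ⊆ S :=
  Finset.biUnion_subset.2 fun p hp => hQ.2.1 p hp

theorem IsPerfectMatching.two_mul_card {S : Finset α} {P : Finset (Finset α)}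
    (hP : IsPerfectMatching S P) : 2 * P.card = S.card := by
  rw [← hP.1.card_biUnion]
  congr 1
  refine Finset.Subset.antisymm hP.1.biUnion_subset fun x hx => ?_
  obtain ⟨p, hp, hxp⟩ := hP.2 x hx
  exact Finset.mem_biUnion.2 ⟨p, hp, hxp⟩

/-- Removing the pairs of `Q` is a bijection from the pair partitions of `S` that contain `Q`
to the pair partitions of the part of `S` not covered by `Q`. -/
theorem card_perfectMatchings_superset {S : Finset α} {Q : Finset (Finset α)}
    (hQ : IsPartialMatching S Q) :
    ((perfectMatchings S).filter fun P => Q ⊆ P).card =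
      (perfectMatchings (S \ Q.biUnion id)).card := by
  have key : ∀ R ∈ perfectMatchings (S \ Q.biUnion id), ∀ p ∈ R, ∀ q ∈ Q, p ∩ q = ∅ := by
    intro R hR p hp q hq
    have h1 := (mem_perfectMatchings.1 hR).1.2.1 p hp
    ext x
    simp only [Finset.mem_inter, Finset.notMem_empty, iff_false, not_and]
    intro hxp hxq
    exact (Finset.mem_sdiff.1 (h1 hxp)).2 (Finset.mem_biUnion.2 ⟨q, hq, hxq⟩)
  refine Finset.card_nbij' (fun P => P \ Q) (fun R => R ∪ Q) ?_ ?_ ?_ ?_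
  · intro P hP
    simp only [Finset.coe_filter, Set.mem_ofPred_eq, mem_perfectMatchings] at hP
    obtain ⟨⟨⟨h2, hS, hd⟩, hc⟩, hQP⟩ := hP
    simp only [Finset.mem_coe, mem_perfectMatchings]
    refine ⟨⟨fun p hp => h2 p (Finset.mem_sdiff.1 hp).1, fun p hp x hx => ?_,
      fun p hp q hq => hd p (Finset.mem_sdiff.1 hp).1 q (Finset.mem_sdiff.1 hq).1⟩,
      fun x hx => ?_⟩
    · rw [Finset.mem_sdiff] at hp
      refine Finset.mem_sdiff.2 ⟨hS p hp.1 hx, fun hx' => ?_⟩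
      obtain ⟨q, hq, hxq⟩ := Finset.mem_biUnion.1 hx'
      have hne : p ≠ q := fun e => hp.2 (e ▸ hq)
      have := hd p hp.1 q (hQP hq) hne
      exact Finset.notMem_empty x (this ▸ Finset.mem_inter.2 ⟨hx, hxq⟩)
    · rw [Finset.mem_sdiff] at hx
      obtain ⟨p, hp, hxp⟩ := hc x hx.1
      exact ⟨p, Finset.mem_sdiff.2
        ⟨hp, fun hpQ => hx.2 (Finset.mem_biUnion.2 ⟨p, hpQ, hxp⟩)⟩, hxp⟩
  · intro R hR
    have hRQ := key R hR
    simp only [Finset.mem_coe, mem_perfectMatchings] at hR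
    obtain ⟨⟨h2, hS, hd⟩, hc⟩ := hR
    simp only [Finset.coe_filter, Set.mem_ofPred_eq, mem_perfectMatchings]
    refine ⟨⟨⟨fun p hp => ?_, fun p hp => ?_, fun p hp q hq hpq => ?_⟩, fun x hx => ?_⟩,
      Finset.subset_union_right⟩
    · exact (Finset.mem_union.1 hp).elim (h2 p) (hQ.1 p)
    · exact (Finset.mem_union.1 hp).elim
        (fun h => (hS p h).trans Finset.sdiff_subset) (hQ.2.1 p)
    · rcases Finset.mem_union.1 hp with hp | hp <;> rcases Finset.mem_union.1 hq with hq | hq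
      · exact hd p hp q hq hpq
      · exact hRQ p hp q hq
      · rw [Finset.inter_comm]; exact hRQ q hq p hp
      · exact hQ.2.2 p hp q hq hpq
    · by_cases hxQ : x ∈ Q.biUnion id
      · obtain ⟨q, hq, hxq⟩ := Finset.mem_biUnion.1 hxQ
        exact ⟨q, Finset.mem_union_right _ hq, hxq⟩
      · obtain ⟨p, hp, hxp⟩ := hc x (Finset.mem_sdiff.2 ⟨hx, hxQ⟩)
        exact ⟨p, Finset.mem_union_left _ hp, hxp⟩
  · intro P hP
    simp only [Finset.coe_filter, Set.mem_ofPred_eq] at hP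
    exact Finset.sdiff_union_of_subset hP.2
  · intro R hR
    refine Finset.union_sdiff_cancel_right (Finset.disjoint_left.2 fun p hp hpQ => ?_)
    -- a common pair would be disjoint from itself, hence empty
    have h0 := key R hR p hp p hpQ
    have h2 := hQ.1 p hpQ
    rw [Finset.inter_self] at h0
    simp [h0] at h2

/-- A set with `2 * m` elements has `(2 * m)! / (2 ^ m * m!)` pair partitions. The induction
removes the pair that contains a fixed element `a`, whose partner can be chosen in `2 * m + 1`
ways. -/
theorem card_perfectMatchings_mul (m : ℕ) : ∀ S : Finset α, S.card = 2 * m →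
    (perfectMatchings S).card * (2 ^ m * m.factorial) = (2 * m).factorial := by
  induction m with
  | zero =>
    intro S hS
    have hS' : S = ∅ := Finset.card_eq_zero.1 (by simpa using hS)
    subst hS'
    have : perfectMatchings (∅ : Finset α) = {∅} := by
      ext P
      rw [mem_perfectMatchings, Finset.mem_singleton]
      constructor
      · intro hP
        have := hP.two_mul_card
        exact Finset.card_eq_zero.1 (by simpa using this)
      · rintro rfl
        simp [IsPerfectMatching, IsPartialMatching]
    simp [this]
  | succ m ih =>
    intro S hS
    obtain ⟨a, ha⟩ : S.Nonempty := Finset.card_pos.1 (by omega)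
    have hpair : ∀ b ∈ S.erase a, IsPartialMatching S {{a, b}} := by
      intro b hb
      rw [Finset.mem_erase] at hb
      refine ⟨?_, ?_, ?_⟩
      · simp [Finset.card_pair hb.1.symm]
      · simp [Finset.insert_subset_iff, ha, hb.2]
      · simp
    have hpartner : ∀ P ∈ perfectMatchings S,
        ((S.erase a).filter fun b => ({{a, b}} : Finset (Finset α)) ⊆ P).card = 1 := by
      intro P hP
      obtain ⟨⟨h2, hsub, hd⟩, hc⟩ := mem_perfectMatchings.1 hP
      obtain ⟨p, hp, hap⟩ := hc a ha
      obtain ⟨b, hb⟩ : ∃ b, p.erase a = {b} := Finset.card_eq_one.1 (by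
        rw [Finset.card_erase_of_mem hap, h2 p hp])
      have hpab : p = {a, b} := by rw [← Finset.insert_erase hap, hb]
      have hbp : b ≠ a ∧ b ∈ p := Finset.mem_erase.1 (hb ▸ Finset.mem_singleton_self b)
      rw [Finset.card_eq_one]
      refine ⟨b, ?_⟩
      ext c
      simp only [Finset.mem_filter, Finset.mem_erase, Finset.singleton_subset_iff,
        Finset.mem_singleton]
      constructor
      · rintro ⟨⟨hca, -⟩, hcP⟩
        have hE : p = {a, c} := by
          by_contra hne
          have := hd p hp _ hcP hne
          have h' : a ∈ p ∩ {a, c} := Finset.mem_inter.2 ⟨hap, by simp⟩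
          simp [this] at h'
        have : c ∈ ({a, b} : Finset α) := by rw [← hpab, hE]; simp
        simpa [hca] using this
      · rintro rfl
        exact ⟨⟨hbp.1, hsub p hp hbp.2⟩, hpab ▸ hp⟩
    have hcount : (perfectMatchings S).card =
        ∑ b ∈ S.erase a, (perfectMatchings (S \ {a, b})).card := by
      have h := Finset.sum_card_bipartiteAbove_eq_sum_card_bipartiteBelow
        (s := perfectMatchings S) (t := S.erase a)
        (fun P b => ({{a, b}} : Finset (Finset α)) ⊆ P)
      simp only [Finset.bipartiteAbove, Finset.bipartiteBelow] at h
      rw [Finset.sum_congr rfl hpartner] at h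
      rw [Finset.card_eq_sum_ones, h]
      refine Finset.sum_congr rfl fun b hb => ?_
      rw [card_perfectMatchings_superset (hpair b hb)]
      simp
    have hrec : ∀ b ∈ S.erase a, (perfectMatchings (S \ {a, b})).card *
        (2 ^ m * m.factorial) = (2 * m).factorial := by
      intro b hb
      apply ih
      rw [Finset.mem_erase] at hb
      rw [Finset.card_sdiff_of_subset (by simp [Finset.insert_subset_iff, ha, hb.2]),
        Finset.card_pair hb.1.symm, hS]
      omega
    have hsum : (perfectMatchings S).card * (2 ^ m * m.factorial) =
        (2 * m + 1) * (2 * m).factorial := by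
      rw [hcount, Finset.sum_mul, Finset.sum_congr rfl hrec, Finset.sum_const,
        Finset.card_erase_of_mem ha, hS, smul_eq_mul]
      congr 1
    rw [show 2 * (m + 1) = 2 * m + 1 + 1 by ring, Nat.factorial_succ, Nat.factorial_succ,
      Nat.factorial_succ, ← hsum]
    ring

theorem card_perfectMatchings {S : Finset α} {m : ℕ} (hS : S.card = 2 * m) :
    (perfectMatchings S).card = df m := by
  unfold df
  rw [← card_perfectMatchings_mul m S hS, Nat.mul_div_cancel _ (by positivity)]

/-- A matching `Q` of `j` pairs inside a set with `2 * m` elements extends to a pair partition in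
`(2 * (m - j) - 1)!!` ways. -/
theorem card_perfectMatchings_superset_eq_df {S : Finset α} {m : ℕ} (hS : S.card = 2 * m)
    {Q : Finset (Finset α)} (hQ : IsPartialMatching S Q) :
    ((perfectMatchings S).filter fun P => Q ⊆ P).card = df (m - Q.card) := by
  rw [card_perfectMatchings_superset hQ]
  apply card_perfectMatchings
  rw [Finset.card_sdiff_of_subset hQ.biUnion_subset, hQ.card_biUnion, hS]
  omega

end PairPartitions

/-! ### Dominoes -/

theorem isPairPartition_iff {k : ℕ} {P : Finset (Finset (Cell k))} :
    IsPairPartition P ↔ P ∈ perfectMatchings (Finset.univ : Finset (Cell k)) := by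
  simp [mem_perfectMatchings, IsPerfectMatching, IsPartialMatching, IsPairPartition, and_assoc]

theorem card_cell (k : ℕ) : (Finset.univ : Finset (Cell k)).card = 2 * k := by
  simp

theorem IsVert.card {k : ℕ} {p : Finset (Cell k)} (hp : IsVert p) : p.card = 2 := by
  obtain ⟨j, rfl⟩ := hp
  exact Finset.card_pair (by simp)

theorem IsHoriz.card {k : ℕ} {p : Finset (Cell k)} (hp : IsHoriz p) : p.card = 2 := by
  obtain ⟨i, j, j', hj, rfl⟩ := hp
  refine Finset.card_pair fun h => ?_
  have := congrArg (fun x : Cell k => (x.2 : ℕ)) h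
  simp only at this
  omega

theorem IsGridEdge.card {k : ℕ} {p : Finset (Cell k)} (hp : IsGridEdge p) : p.card = 2 :=
  hp.elim IsVert.card IsHoriz.card

theorem IsVert.not_isHoriz {k : ℕ} {p : Finset (Cell k)} (hp : IsVert p) : ¬ IsHoriz p := by
  rintro ⟨i, a, b, hab, rfl⟩
  obtain ⟨j, hj⟩ := hp
  have h1 : (i, a) ∈ ({(0, j), (1, j)} : Finset (Cell k)) := by rw [← hj]; simp
  have h2 : (i, b) ∈ ({(0, j), (1, j)} : Finset (Cell k)) := by rw [← hj]; simp
  simp only [Finset.mem_insert, Finset.mem_singleton, Prod.mk.injEq] at h1 h2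
  have ha : a = j := by tauto
  have hb : b = j := by tauto
  subst ha hb
  omega

open scoped Classical in
/-- The triples `(V, H, M)` counted by `rho j k v h`. -/
noncomputable def rhoTriples (j k v h : ℕ) :
    Finset (Finset (Finset (Cell k)) × Finset (Finset (Cell k)) × Finset (Finset (Cell k))) :=
  Finset.univ.filter fun T =>
    (∀ p ∈ T.1, IsVert p) ∧ T.1.card = v ∧
    (∀ p ∈ T.2.1, IsHoriz p) ∧ T.2.1.card = h ∧
    (∀ p ∈ T.1 ∪ T.2.1, ∀ q ∈ T.1 ∪ T.2.1, p ≠ q → p ∩ q = ∅) ∧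
    (∀ e ∈ T.2.2, IsGridEdge e) ∧ T.2.2.card = j ∧
    (∀ e ∈ T.2.2, ∀ f ∈ T.2.2, e ≠ f → e ∩ f = ∅) ∧
    (∀ e ∈ T.2.2, ∀ p ∈ T.1 ∪ T.2.1, e ∩ p = ∅)

/-- The three parts of a triple together form a matching with `v + h + j` edges. -/
theorem rhoTriples_isPartialMatching {j k v h : ℕ}
    {T : Finset (Finset (Cell k)) × Finset (Finset (Cell k)) × Finset (Finset (Cell k))}
    (hT : T ∈ rhoTriples j k v h) :
    IsPartialMatching Finset.univ (T.1 ∪ T.2.1 ∪ T.2.2) ∧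
      (T.1 ∪ T.2.1 ∪ T.2.2).card = v + h + j := by
  obtain ⟨V, H, M⟩ := T
  simp only [rhoTriples, Finset.mem_filter, Finset.mem_univ, true_and] at hT ⊢
  obtain ⟨hV, hVc, hH, hHc, hVH, hM, hMc, hMd, hMVH⟩ := hT
  refine ⟨⟨fun p hp => ?_, fun p _ => Finset.subset_univ p, fun p hp q hq hpq => ?_⟩, ?_⟩
  · simp only [Finset.mem_union] at hp
    rcases hp with (hp | hp) | hp
    · exact (hV p hp).card
    · exact (hH p hp).card
    · exact (hM p hp).card
  · rcases Finset.mem_union.1 hp with hp | hp <;> rcases Finset.mem_union.1 hq with hq | hq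
    · exact hVH p hp q hq hpq
    · rw [Finset.inter_comm]; exact hMVH q hq p hp
    · exact hMVH p hp q hq
    · exact hMd p hp q hq hpq
  · rw [Finset.card_union_of_disjoint, Finset.card_union_of_disjoint, hVc, hHc, hMc]
    · exact Finset.disjoint_left.2 fun p hp hp' => (hV p hp).not_isHoriz (hH p hp')
    · refine Finset.disjoint_left.2 fun p hp hp' => ?_
      -- a common pair would be disjoint from itself, hence empty
      have h0 := hMVH p hp' p hp
      have h2 := (hM p hp').card
      rw [Finset.inter_self] at h0
      simp [h0] at h2

open scoped Classical in
/-- Inside a fixed pair partition `P`, disjointness of distinct pairs is automatic, so a triple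
amounts to a choice of `V` among the vertical dominoes of `P`, of `H` among the horizontal ones,
and of `M` among the remaining dominoes. -/
theorem card_rhoTriples_subset (j k v h : ℕ) {P : Finset (Finset (Cell k))}
    (hP : IsPairPartition P) :
    ((rhoTriples j k v h).filter fun T => T.1 ∪ T.2.1 ∪ T.2.2 ⊆ P).card =
      (P.filter fun p => IsVert p).card.choose v * (P.filter fun p => IsHoriz p).card.choose h *
        ((P.filter fun p => IsVert p).card + (P.filter fun p => IsHoriz p).card
          - (v + h)).choose j := by
  set A := P.filter fun p => IsVert p with hA
  set B := P.filter fun p => IsHoriz p with hB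
  have hAB : Disjoint A B := Finset.disjoint_left.2 fun p hp hp' =>
    (Finset.mem_filter.1 hp).2.not_isHoriz (Finset.mem_filter.1 hp').2
  have hcard : ((rhoTriples j k v h).filter fun T => T.1 ∪ T.2.1 ∪ T.2.2 ⊆ P).card =
      ((A.powersetCard v ×ˢ B.powersetCard h).sigma fun W =>
        ((A ∪ B) \ (W.1 ∪ W.2)).powersetCard j).card := by
    refine Finset.card_nbij' (fun T => ⟨(T.1, T.2.1), T.2.2⟩) (fun W => (W.1.1, W.1.2, W.2))
      ?_ ?_ (fun _ _ => rfl) (fun _ _ => rfl)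
    · rintro ⟨V, H, M⟩ hT
      simp only [rhoTriples, Finset.coe_filter, Finset.mem_filter, Finset.mem_univ, true_and,
        Set.mem_ofPred_eq] at hT
      obtain ⟨⟨hV, hVc, hH, hHc, hVH, hM, hMc, hMd, hMVH⟩, hsub⟩ := hT
      simp only [Finset.mem_coe, Finset.mem_sigma, Finset.mem_product, Finset.mem_powersetCard]
      refine ⟨⟨⟨fun p hp => ?_, hVc⟩, fun p hp => ?_, hHc⟩, fun p hp => ?_, hMc⟩
      · exact Finset.mem_filter.2 ⟨hsub (by simp [hp]), hV p hp⟩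
      · exact Finset.mem_filter.2 ⟨hsub (by simp [hp]), hH p hp⟩
      · have hpP : p ∈ P := hsub (by simp [hp])
        refine Finset.mem_sdiff.2 ⟨?_, fun hp' => ?_⟩
        · rcases hM p hp with h' | h'
          · exact Finset.mem_union_left _ (Finset.mem_filter.2 ⟨hpP, h'⟩)
          · exact Finset.mem_union_right _ (Finset.mem_filter.2 ⟨hpP, h'⟩)
        · have h0 := hMVH p hp p hp'
          have h2 := (hM p hp).card
          rw [Finset.inter_self] at h0
          simp [h0] at h2
    · rintro ⟨⟨V, H⟩, M⟩ hW
      simp only [Finset.mem_coe, Finset.mem_sigma, Finset.mem_product,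
        Finset.mem_powersetCard] at hW
      obtain ⟨⟨⟨hV, hVc⟩, hH, hHc⟩, hM, hMc⟩ := hW
      have hVP : ∀ p ∈ V, p ∈ P := fun p hp => (Finset.mem_filter.1 (hV hp)).1
      have hHP : ∀ p ∈ H, p ∈ P := fun p hp => (Finset.mem_filter.1 (hH hp)).1
      have hVHP : ∀ p ∈ V ∪ H, p ∈ P := fun p hp =>
        (Finset.mem_union.1 hp).elim (hVP p) (hHP p)
      have hMAB : ∀ p ∈ M, p ∈ P ∧ IsGridEdge p := by
        intro p hp
        rcases Finset.mem_union.1 (Finset.mem_sdiff.1 (hM hp)).1 with h' | h'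
        · exact ⟨(Finset.mem_filter.1 h').1, Or.inl (Finset.mem_filter.1 h').2⟩
        · exact ⟨(Finset.mem_filter.1 h').1, Or.inr (Finset.mem_filter.1 h').2⟩
      simp only [rhoTriples, Finset.coe_filter, Finset.mem_filter, Finset.mem_univ, true_and,
        Set.mem_ofPred_eq]
      refine ⟨⟨fun p hp => (Finset.mem_filter.1 (hV hp)).2, hVc,
        fun p hp => (Finset.mem_filter.1 (hH hp)).2, hHc,
        fun p hp q hq => hP.2.1 p (hVHP p hp) q (hVHP q hq),
        fun p hp => (hMAB p hp).2, hMc,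
        fun p hp q hq => hP.2.1 p (hMAB p hp).1 q (hMAB q hq).1,
        fun p hp q hq => hP.2.1 p (hMAB p hp).1 q (hVHP q hq) ?_⟩, ?_⟩
      · rintro rfl
        exact (Finset.mem_sdiff.1 (hM hp)).2 hq
      · exact Finset.union_subset hVHP fun p hp => (hMAB p hp).1
  rw [hcard, Finset.card_sigma]
  have hconst : ∀ W ∈ A.powersetCard v ×ˢ B.powersetCard h,
      (((A ∪ B) \ (W.1 ∪ W.2)).powersetCard j).card =
        (A.card + B.card - (v + h)).choose j := by
    rintro ⟨V, H⟩ hW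
    simp only [Finset.mem_product, Finset.mem_powersetCard] at hW
    obtain ⟨⟨hV, hVc⟩, hH, hHc⟩ := hW
    rw [Finset.card_powersetCard,
      Finset.card_sdiff_of_subset (Finset.union_subset_union hV hH),
      Finset.card_union_of_disjoint hAB,
      Finset.card_union_of_disjoint (Finset.disjoint_of_subset_left hV
        (Finset.disjoint_of_subset_right hH hAB)), hVc, hHc]
  rw [Finset.sum_congr rfl hconst, Finset.sum_const, Finset.card_product,
    Finset.card_powersetCard, Finset.card_powersetCard, smul_eq_mul]

open scoped Classical in
/-- Double counting of the incidences between triples `(V, H, M)` and pair partitions containing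
`V ∪ H ∪ M`. -/
theorem df_mul_rho (j k v h : ℕ) :
    df (k - v - h - j) * rho j k v h =
      ∑ P ∈ perfectMatchings (Finset.univ : Finset (Cell k)),
        (P.filter fun p => IsVert p).card.choose v * (P.filter fun p => IsHoriz p).card.choose h *
          ((P.filter fun p => IsVert p).card + (P.filter fun p => IsHoriz p).card
            - (v + h)).choose j := by
  have hdc := Finset.sum_card_bipartiteAbove_eq_sum_card_bipartiteBelow
    (s := rhoTriples j k v h) (t := perfectMatchings (Finset.univ : Finset (Cell k)))
    (fun T P => T.1 ∪ T.2.1 ∪ T.2.2 ⊆ P)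
  simp only [Finset.bipartiteAbove, Finset.bipartiteBelow] at hdc
  have hT : ∀ T ∈ rhoTriples j k v h,
      ((perfectMatchings (Finset.univ : Finset (Cell k))).filter
        fun P => T.1 ∪ T.2.1 ∪ T.2.2 ⊆ P).card = df (k - v - h - j) := by
    intro T hT
    obtain ⟨hm, hc⟩ := rhoTriples_isPartialMatching hT
    have := card_perfectMatchings_superset_eq_df (card_cell k) hm
    rw [hc] at this
    rw [show k - v - h - j = k - (v + h + j) by omega, ← this]
  rw [Finset.sum_congr rfl hT, Finset.sum_const, smul_eq_mul, mul_comm] at hdc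
  rw [← Finset.sum_congr rfl fun P hP =>
    card_rhoTriples_subset j k v h (isPairPartition_iff.2 hP), ← hdc]
  rfl

/-- The inclusion–exclusion sum for a configuration with `a` vertical and `b` horizontal
dominoes. -/
theorem alternating_sum_choose {a b v h n : ℕ} (hn : a + b ≤ v + h + n) :
    ∑ j ∈ Finset.range (n + 1),
      (-1 : ℤ) ^ j * ((a.choose v * b.choose h * (a + b - (v + h)).choose j : ℕ) : ℤ) =
      if a = v ∧ b = h then 1 else 0 := by
  have hr : a + b - (v + h) ≤ n := by omega
  have halt : ∑ j ∈ Finset.range (n + 1), (-1 : ℤ) ^ j * ((a + b - (v + h)).choose j : ℤ) =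
      if a + b - (v + h) = 0 then 1 else 0 := by
    rw [← Int.alternating_sum_range_choose]
    symm
    refine Finset.sum_subset (fun x hx => ?_) fun x _ hx => ?_
    · simp only [Finset.mem_range] at hx ⊢; omega
    · rw [Nat.choose_eq_zero_of_lt (by simp only [Finset.mem_range] at hx; omega)]
      simp
  have hfac : ∑ j ∈ Finset.range (n + 1),
      (-1 : ℤ) ^ j * ((a.choose v * b.choose h * (a + b - (v + h)).choose j : ℕ) : ℤ) =
      (a.choose v * b.choose h : ℤ) *
        ∑ j ∈ Finset.range (n + 1), (-1 : ℤ) ^ j * ((a + b - (v + h)).choose j : ℤ) := by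
    rw [Finset.mul_sum]
    refine Finset.sum_congr rfl fun j _ => ?_
    push_cast
    ring
  rw [hfac, halt]
  rcases lt_or_ge a v with hav | hav
  · rw [Nat.choose_eq_zero_of_lt hav, if_neg (by omega : ¬ (a = v ∧ b = h))]
    simp
  rcases lt_or_ge b h with hbh | hbh
  · rw [Nat.choose_eq_zero_of_lt hbh, if_neg (by omega : ¬ (a = v ∧ b = h))]
    simp
  by_cases hab : a = v ∧ b = h
  · obtain ⟨rfl, rfl⟩ := hab
    simp
  · rw [if_neg hab, if_neg (by omega), mul_zero]

/-- For `v + h ≤ k`, with `n := k - v - h`,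
`D_{k,v,h} = Σ_{j=0}^{n} (-1)^j (2n-2j-1)!! ρ_j(k,v,h)`,
where `(2(n-j)-1)!! = df (n - j)`. -/
theorem domino_count_from_matchings (k v h : ℕ) (hvh : v + h ≤ k) :
    (D k v h : ℤ) =
      ∑ j ∈ Finset.range (k - v - h + 1),
        (-1) ^ j * (df (k - v - h - j) : ℤ) * (rho j k v h : ℤ) := by
  classical
  have hD : (D k v h : ℤ) =
      ∑ P ∈ perfectMatchings (Finset.univ : Finset (Cell k)),
        if (P.filter fun p => IsVert p).card = v ∧ (P.filter fun p => IsHoriz p).card = h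
          then (1 : ℤ) else 0 := by
    rw [Finset.sum_boole]
    unfold D
    congr 2
    ext P
    simp [isPairPartition_iff]
  rw [hD]
  have hR : ∀ j ∈ Finset.range (k - v - h + 1),
      (-1 : ℤ) ^ j * (df (k - v - h - j) : ℤ) * (rho j k v h : ℤ) =
      ∑ P ∈ perfectMatchings (Finset.univ : Finset (Cell k)), (-1 : ℤ) ^ j *
        (((P.filter fun p => IsVert p).card.choose v *
          (P.filter fun p => IsHoriz p).card.choose h *
          ((P.filter fun p => IsVert p).card + (P.filter fun p => IsHoriz p).card
            - (v + h)).choose j : ℕ) : ℤ) := by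
    intro j _
    have hj : (df (k - v - h - j) : ℤ) * (rho j k v h : ℤ) = _ :=
      (Nat.cast_mul _ _).symm.trans (congrArg (Nat.cast : ℕ → ℤ) (df_mul_rho j k v h))
    rw [mul_assoc, hj, Nat.cast_sum, Finset.mul_sum]
  rw [Finset.sum_congr rfl hR, Finset.sum_comm]
  refine Finset.sum_congr rfl fun P hP => ?_
  rw [alternating_sum_choose]
  -- `P` has `k` pairs, so it has at most `k` dominoes
  have hc := (mem_perfectMatchings.1 hP).two_mul_card
  rw [card_cell] at hc
  have hAB : Disjoint (P.filter fun p => IsVert p) (P.filter fun p => IsHoriz p) :=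
    Finset.disjoint_left.2 fun p hp hp' =>
      (Finset.mem_filter.1 hp).2.not_isHoriz (Finset.mem_filter.1 hp').2
  have hle := Finset.card_le_card (Finset.union_subset
    (Finset.filter_subset (fun p => IsVert p) P) (Finset.filter_subset (fun p => IsHoriz p) P))
  rw [Finset.card_union_of_disjoint hAB] at hle
  omega
end

section
/- Writing D_{k,h} := Σ_{v≥0} D_{k,v,h}, for every k ≥ 1 the following recursion holds: for every h ≥ 1, D_{k,h} + D_{k−1,h−1} = D_{k−1,h} + L_{k,h}, and for h = 0, D_{k,0} = D_{k−1,0} + L_{k,0}. -/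
open scoped Classical in
/-- `L k h`: the number of partitions of `{0, 1, …, 2k-1}` into `k` unordered pairs,
exactly `h` of which are of the form `{i, i+1}`. -/
noncomputable def L (k h : ℕ) : ℕ :=
  (Finset.univ.filter fun P : Finset (Finset (Fin (2 * k))) =>
    ((∀ p ∈ P, p.card = 2) ∧ (∀ p ∈ P, ∀ q ∈ P, p ≠ q → p ∩ q = ∅) ∧
      (∀ x : Fin (2 * k), ∃ p ∈ P, x ∈ p)) ∧
    (P.filter fun p => ∃ i i' : Fin (2 * k), (i' : ℕ) = (i : ℕ) + 1 ∧ p = {i, i'}).card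
      = h).card

open scoped Classical in
/-- The number of horizontal dominoes of `P`. -/
noncomputable def numHoriz {k : ℕ} (P : Finset (Finset (Cell k))) : ℕ :=
  (P.filter fun p => IsHoriz p).card

/-- The vertical cell-pair in the last column. -/
def lastCol (n : ℕ) : Finset (Cell (n + 1)) :=
  {((0 : Fin 2), Fin.last n), ((1 : Fin 2), Fin.last n)}

open scoped Classical in
lemma finsum_D (k h : ℕ) : (∑ᶠ v : ℕ, D k v h) =
    (Finset.univ.filter fun P : Finset (Finset (Cell k)) =>
      IsPairPartition P ∧ numHoriz P = h).card := by
  set N := (Finset.univ : Finset (Finset (Cell k))).card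
  have hN : ∀ P : Finset (Finset (Cell k)), (P.filter fun p => IsVert p).card < N + 1 :=
    fun P => Nat.lt_succ_of_le (Finset.card_le_card (Finset.subset_univ _))
  rw [finsum_eq_sum_of_support_subset (s := Finset.range (N + 1))]
  · rw [Finset.card_eq_sum_card_fiberwise (t := Finset.range (N + 1))
      (f := fun P => (P.filter fun p => IsVert p).card)]
    · refine Finset.sum_congr rfl fun v _ => ?_
      unfold D numHoriz
      rw [Finset.filter_filter]
      congr 1
      ext P
      simp only [Finset.mem_filter, Finset.mem_univ, true_and]
      tauto
    · intro P _
      simpa using hN P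
  · intro v hv
    rw [Function.mem_support] at hv
    obtain ⟨P, hP⟩ := Finset.card_pos.1 (Nat.pos_of_ne_zero hv)
    simp only [Finset.mem_filter] at hP
    have := hN P
    simp only [Finset.coe_range, Set.mem_Iio]
    omega

/-- The boustrophedon numbering of the cells: row `0` from left to right, then row `1` from right
to left. -/
def snake (k : ℕ) : Cell k ≃ Fin (2 * k) where
  toFun x := if x.1 = 0 then ⟨x.2, by omega⟩ else ⟨2 * k - 1 - x.2, by omega⟩
  invFun y := if h : (y : ℕ) < k then (0, ⟨y, h⟩) else (1, ⟨2 * k - 1 - y, by omega⟩)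
  left_inv := by
    rintro ⟨i, j⟩
    have := j.2
    fin_cases i
    · simp
    · have h1 : ¬ (2 * k - 1 - (j : ℕ) < k) := by omega
      simp only [Fin.mk_one, one_ne_zero, if_false, h1, dif_neg, not_false_eq_true]
      ext
      · rfl
      · simp only; omega
  right_inv := by
    intro y
    have := y.2
    by_cases h : (y : ℕ) < k
    · simp [h]
    · simp only [h, dif_neg, not_false_eq_true, one_ne_zero, if_false]
      ext
      simp only; omega

lemma snake_zero {k : ℕ} (j : Fin k) : (snake k (0, j) : ℕ) = j := by simp [snake]

lemma snake_one {k : ℕ} (j : Fin k) : (snake k (1, j) : ℕ) = 2 * k - 1 - j := by simp [snake]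

lemma snake_pair {n : ℕ} (p : Finset (Cell (n + 1))) :
    (∃ i i' : Fin (2 * (n + 1)), (i' : ℕ) = (i : ℕ) + 1 ∧
      p.map (snake (n + 1)).toEmbedding = {i, i'}) ↔ IsHoriz p ∨ p = lastCol n := by
  have key : (∃ i i' : Fin (2 * (n + 1)), (i' : ℕ) = (i : ℕ) + 1 ∧
      p.map (snake (n + 1)).toEmbedding = {i, i'}) ↔
      ∃ x x' : Cell (n + 1), (snake _ x' : ℕ) = (snake _ x : ℕ) + 1 ∧ p = {x, x'} := by
    have h2 : ∀ x x' : Cell (n + 1),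
        p.map (snake (n + 1)).toEmbedding = {snake _ x, snake _ x'} ↔ p = {x, x'} := by
      intro x x'
      rw [← Finset.map_inj (f := (snake (n + 1)).toEmbedding) (s₁ := p)]
      simp [Finset.map_insert]
    constructor
    · rintro ⟨i, i', h, hp⟩
      refine ⟨(snake _).symm i, (snake _).symm i', by simpa using h, ?_⟩
      rw [← h2]
      simpa using hp
    · rintro ⟨x, x', h, hp⟩
      exact ⟨_, _, h, (h2 x x').2 hp⟩
  rw [key]
  constructor
  · rintro ⟨⟨a, j⟩, ⟨b, j'⟩, h, rfl⟩
    have := j.2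
    have := j'.2
    fin_cases a <;> fin_cases b <;>
      simp only [Fin.zero_eta, Fin.mk_one, snake_zero, snake_one] at h ⊢
    · exact Or.inl ⟨0, j, j', h, rfl⟩
    · right
      have e1 : j = Fin.last n := Fin.ext (by simp only [Fin.val_last]; omega)
      have e2 : j' = Fin.last n := Fin.ext (by simp only [Fin.val_last]; omega)
      rw [e1, e2, lastCol]
    · omega
    -- Row `1` is read from right to left, so the two cells come in reverse order.
    · exact Or.inl ⟨1, j', j, by omega, Finset.pair_comm _ _⟩
  · rintro (⟨a, j, j', h, rfl⟩ | rfl)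
    · have := j.2
      have := j'.2
      fin_cases a
      · exact ⟨(0, j), (0, j'), by simpa [snake_zero] using h, rfl⟩
      · exact ⟨(1, j'), (1, j), by simp only [snake_one]; omega, Finset.pair_comm _ _⟩
    · exact ⟨(0, Fin.last n), (1, Fin.last n), by
        simp only [snake_zero, snake_one, Fin.val_last]; omega, rfl⟩

lemma lastCol_not_isHoriz (n : ℕ) : ¬ IsHoriz (lastCol n) := by
  rintro ⟨i, j, j', -, h⟩
  have h0 : ((0 : Fin 2), Fin.last n) ∈ lastCol n := by simp [lastCol]
  have h1 : ((1 : Fin 2), Fin.last n) ∈ lastCol n := by simp [lastCol]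
  rw [h] at h0 h1
  simp only [Finset.mem_insert, Finset.mem_singleton, Prod.mk.injEq] at h0 h1
  have e0 : 0 = i := by tauto
  have e1 : 1 = i := by tauto
  exact absurd (e0.trans e1.symm) (by decide)

open scoped Classical in
lemma L_eq (n h : ℕ) : L (n + 1) h =
    (Finset.univ.filter fun P : Finset (Finset (Cell (n + 1))) =>
      IsPairPartition P ∧ numHoriz P + (if lastCol n ∈ P then 1 else 0) = h).card := by
  symm
  unfold L
  refine Finset.card_equiv (snake (n + 1)).finsetCongr.finsetCongr fun P => ?_
  simp only [Finset.mem_filter, Finset.mem_univ, true_and, Equiv.finsetCongr_apply]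
  have hcount : ((P.map (snake (n + 1)).finsetCongr.toEmbedding).filter
      fun p => ∃ i i' : Fin (2 * (n + 1)), (i' : ℕ) = (i : ℕ) + 1 ∧ p = {i, i'}).card =
      numHoriz P + (if lastCol n ∈ P then 1 else 0) := by
    rw [Finset.filter_map, Finset.card_map]
    have : (P.filter ((fun p => ∃ i i' : Fin (2 * (n + 1)), (i' : ℕ) = (i : ℕ) + 1 ∧ p = {i, i'})
        ∘ (snake (n + 1)).finsetCongr.toEmbedding)) =
        P.filter (fun p => IsHoriz p) ∪ P.filter (fun p => p = lastCol n) := by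
      rw [← Finset.filter_or]
      refine Finset.filter_congr fun p _ => ?_
      exact snake_pair p
    rw [this, Finset.card_union_of_disjoint]
    · congr 1
      rw [Finset.filter_eq']
      split_ifs <;> simp
    · rw [Finset.disjoint_filter]
      rintro p - hp rfl
      exact lastCol_not_isHoriz n hp
  rw [hcount]
  refine and_congr_left fun _ => ?_
  unfold IsPairPartition
  simp only [Finset.forall_mem_map, Equiv.coe_toEmbedding,
    Equiv.finsetCongr_apply, Finset.card_map, ← Finset.map_inter, Finset.map_eq_empty, ne_eq,
    Finset.map_inj]
  refine and_congr_right fun _ => and_congr_right fun _ => ?_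
  constructor
  · intro H y
    obtain ⟨p, hp, hx⟩ := H ((snake _).symm y)
    exact ⟨p.map (snake _).toEmbedding, Finset.mem_map_of_mem (snake _).finsetCongr.toEmbedding hp, by
      simpa [Finset.mem_map_equiv] using hx⟩
  · intro H x
    obtain ⟨_, hp', hx⟩ := H (snake _ x)
    obtain ⟨p, hp, rfl⟩ := Finset.mem_map.1 hp'
    exact ⟨p, hp, by simpa [Finset.mem_map_equiv] using hx⟩

/-- The inclusion of the `2 × n` array into the `2 × (n+1)` array as its first `n` columns. -/
def cellEmb (n : ℕ) : Cell n ↪ Cell (n + 1) :=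
  (Function.Embedding.refl (Fin 2)).prodMap Fin.castSuccEmb

@[simp] lemma cellEmb_apply (n : ℕ) (i : Fin 2) (j : Fin n) :
    cellEmb n (i, j) = (i, j.castSucc) := rfl

lemma exists_cellEmb {n : ℕ} {x : Cell (n + 1)} (hx : x ∉ lastCol n) :
    ∃ y, cellEmb n y = x := by
  obtain ⟨i, j⟩ := x
  have hj : j ≠ Fin.last n := by
    rintro rfl
    apply hx
    fin_cases i <;> simp [lastCol]
  exact ⟨(i, j.castPred hj), by simp⟩

lemma cellEmb_notMem {n : ℕ} (y : Cell n) : cellEmb n y ∉ lastCol n := by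
  obtain ⟨i, j⟩ := y
  have := j.2
  simp only [cellEmb_apply, lastCol, Finset.mem_insert, Finset.mem_singleton, Prod.mk.injEq,
    Fin.ext_iff, Fin.val_castSucc, Fin.val_last]
  omega

lemma isHoriz_map {n : ℕ} (q : Finset (Cell n)) :
    IsHoriz (q.map (cellEmb n)) ↔ IsHoriz q := by
  constructor
  · rintro ⟨i, j, j', hj, h⟩
    have m : ∀ a, (a = (i, j) ∨ a = (i, j')) → ∃ y ∈ q, cellEmb n y = a := by
      intro a ha
      have : a ∈ q.map (cellEmb n) := by rw [h]; simpa using ha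
      simpa using this
    obtain ⟨⟨a, b⟩, -, hy⟩ := m _ (Or.inl rfl)
    obtain ⟨⟨a', b'⟩, -, hy'⟩ := m _ (Or.inr rfl)
    simp only [cellEmb_apply, Prod.mk.injEq] at hy hy'
    obtain ⟨rfl, rfl⟩ := hy
    obtain ⟨rfl, rfl⟩ := hy'
    refine ⟨a', b, b', by simpa using hj, ?_⟩
    rw [← Finset.map_inj (f := cellEmb n), h]
    simp [Finset.map_insert]
  · rintro ⟨i, j, j', hj, rfl⟩
    exact ⟨i, j.castSucc, j'.castSucc, by simpa using hj, by simp [Finset.map_insert]⟩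

open scoped Classical in
/-- Add the last column, as a vertical domino, to a configuration of the `2 × n` game. -/
noncomputable def extend {n : ℕ} (Q : Finset (Finset (Cell n))) : Finset (Finset (Cell (n + 1))) :=
  insert (lastCol n) (Q.map (Finset.mapEmbedding (cellEmb n)).toEmbedding)

lemma mem_extend {n : ℕ} (Q : Finset (Finset (Cell n))) (p : Finset (Cell (n + 1))) :
    p ∈ extend Q ↔ p = lastCol n ∨ ∃ q ∈ Q, q.map (cellEmb n) = p := by
  simp [extend, Finset.mapEmbedding_apply]

lemma map_ne_lastCol {n : ℕ} (q : Finset (Cell n)) : q.map (cellEmb n) ≠ lastCol n := by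
  intro h
  have h0 : ((0 : Fin 2), Fin.last n) ∈ lastCol n := by simp [lastCol]
  have h1 := h0
  rw [← h, Finset.mem_map] at h1
  obtain ⟨y, -, hy⟩ := h1
  exact cellEmb_notMem y (hy ▸ h0)

lemma map_inter_lastCol {n : ℕ} (q : Finset (Cell n)) : q.map (cellEmb n) ∩ lastCol n = ∅ := by
  ext x
  simp only [Finset.mem_inter, Finset.mem_map, Finset.notMem_empty, iff_false, not_and]
  rintro ⟨y, -, rfl⟩
  exact cellEmb_notMem y

lemma map_mem_extend {n : ℕ} (Q : Finset (Finset (Cell n))) (q : Finset (Cell n)) :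
    q.map (cellEmb n) ∈ extend Q ↔ q ∈ Q := by
  simp [mem_extend, map_ne_lastCol, Finset.map_inj]

lemma numHoriz_extend {n : ℕ} (Q : Finset (Finset (Cell n))) :
    numHoriz (extend Q) = numHoriz Q := by
  classical
  unfold numHoriz extend
  rw [Finset.filter_insert, if_neg (lastCol_not_isHoriz n), Finset.filter_map, Finset.card_map]
  congr 1
  refine Finset.filter_congr fun q _ => ?_
  exact isHoriz_map q

lemma isPairPartition_extend {n : ℕ} (Q : Finset (Finset (Cell n))) :
    IsPairPartition (extend Q) ↔ IsPairPartition Q := by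
  constructor
  · rintro ⟨h1, h2, h3⟩
    refine ⟨fun q hq => ?_, fun p hp q hq hpq => ?_, fun x => ?_⟩
    · simpa using h1 _ ((map_mem_extend Q q).2 hq)
    · simpa [← Finset.map_inter] using h2 _ ((map_mem_extend Q p).2 hp) _
        ((map_mem_extend Q q).2 hq) (by simpa [Finset.map_inj] using hpq)
    · obtain ⟨p, hp, hx⟩ := h3 (cellEmb n x)
      rcases (mem_extend Q p).1 hp with rfl | ⟨q, hq, rfl⟩
      · exact absurd hx (cellEmb_notMem x)
      · exact ⟨q, hq, by simpa only [Finset.mem_map'] using hx⟩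
  · rintro ⟨h1, h2, h3⟩
    refine ⟨fun p hp => ?_, fun p hp p' hp' hpp => ?_, fun x => ?_⟩
    · rcases (mem_extend Q p).1 hp with rfl | ⟨q, hq, rfl⟩
      · exact Finset.card_pair (by simp)
      · simpa using h1 q hq
    · rcases (mem_extend Q p).1 hp with rfl | ⟨q, hq, rfl⟩ <;>
        rcases (mem_extend Q p').1 hp' with rfl | ⟨q', hq', rfl⟩
      · exact absurd rfl hpp
      · rw [Finset.inter_comm, map_inter_lastCol]
      · exact map_inter_lastCol q
      · rw [← Finset.map_inter, h2 q hq q' hq' (by rintro rfl; exact hpp rfl), Finset.map_empty]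
    · by_cases hx : x ∈ lastCol n
      · exact ⟨_, (mem_extend Q _).2 (Or.inl rfl), hx⟩
      · obtain ⟨y, rfl⟩ := exists_cellEmb hx
        obtain ⟨q, hq, hy⟩ := h3 y
        exact ⟨_, (map_mem_extend Q q).2 hq, by simpa only [Finset.mem_map'] using hy⟩

lemma exists_extend {n : ℕ} {P : Finset (Finset (Cell (n + 1)))} (hP : IsPairPartition P)
    (hl : lastCol n ∈ P) : ∃ Q, extend Q = P := by
  classical
  refine ⟨Finset.univ.filter fun q => q.map (cellEmb n) ∈ P, ?_⟩
  ext p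
  rw [mem_extend]
  simp only [Finset.mem_filter, Finset.mem_univ, true_and]
  constructor
  · rintro (rfl | ⟨q, hq, rfl⟩)
    · exact hl
    · exact hq
  · intro hp
    by_cases hpl : p = lastCol n
    · exact Or.inl hpl
    -- A pair other than the last column is disjoint from it, so it lies in the first `n` columns.
    · have hd := hP.2.1 p hp _ hl hpl
      have e : (Finset.univ.filter fun y => cellEmb n y ∈ p).map (cellEmb n) = p := by
        ext x
        simp only [Finset.mem_map, Finset.mem_filter, Finset.mem_univ, true_and]
        constructor
        · rintro ⟨y, hy, rfl⟩
          exact hy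
        · intro hx
          have hxl : x ∉ lastCol n := fun h =>
            Finset.notMem_empty x (hd ▸ Finset.mem_inter.2 ⟨hx, h⟩)
          obtain ⟨y, rfl⟩ := exists_cellEmb hxl
          exact ⟨y, hx, rfl⟩
      exact Or.inr ⟨_, by rw [e]; exact hp, e⟩

open scoped Classical in
lemma card_lastCol (n h : ℕ) :
    (Finset.univ.filter fun P : Finset (Finset (Cell (n + 1))) =>
      (IsPairPartition P ∧ numHoriz P = h) ∧ lastCol n ∈ P).card =
    (Finset.univ.filter fun Q : Finset (Finset (Cell n)) =>
      IsPairPartition Q ∧ numHoriz Q = h).card := by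
  symm
  refine Finset.card_bij (fun Q _ => extend Q) ?_ ?_ ?_
  · intro Q hQ
    simp only [Finset.mem_filter, Finset.mem_univ, true_and] at hQ ⊢
    rw [isPairPartition_extend, numHoriz_extend]
    exact ⟨hQ, (mem_extend Q _).2 (Or.inl rfl)⟩
  · intro Q _ Q' _ h
    ext q
    rw [← map_mem_extend, h, map_mem_extend]
  · intro P hP
    simp only [Finset.mem_filter, Finset.mem_univ, true_and] at hP
    obtain ⟨Q, rfl⟩ := exists_extend hP.1.1 hP.2
    rw [isPairPartition_extend, numHoriz_extend] at hP
    exact ⟨Q, by simpa using hP.1, rfl⟩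

open scoped Classical in
lemma finsum_D_succ (n h : ℕ) : (∑ᶠ v : ℕ, D (n + 1) v h) = (∑ᶠ v : ℕ, D n v h) +
    (Finset.univ.filter fun P : Finset (Finset (Cell (n + 1))) =>
      (IsPairPartition P ∧ numHoriz P = h) ∧ lastCol n ∉ P).card := by
  rw [finsum_D, finsum_D, ← card_lastCol n,
    ← Finset.card_filter_add_card_filter_not (fun P => lastCol n ∈ P)]
  simp only [Finset.filter_filter]

open scoped Classical in
lemma L_split (n h : ℕ) : L (n + 1) h =
    (Finset.univ.filter fun P : Finset (Finset (Cell (n + 1))) =>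
      (IsPairPartition P ∧ numHoriz P + 1 = h) ∧ lastCol n ∈ P).card +
    (Finset.univ.filter fun P : Finset (Finset (Cell (n + 1))) =>
      (IsPairPartition P ∧ numHoriz P = h) ∧ lastCol n ∉ P).card := by
  rw [L_eq, ← Finset.card_filter_add_card_filter_not (fun P => lastCol n ∈ P)]
  simp only [Finset.filter_filter]
  congr 2
  · ext P
    by_cases hP : lastCol n ∈ P <;> simp [hP]
  · ext P
    by_cases hP : lastCol n ∈ P <;> simp [hP]

/-- With `D_{k,h} := Σ_{v≥0} D_{k,v,h}`, for `k ≥ 1`: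
for every `h ≥ 1`, `D_{k,h} + D_{k-1,h-1} = D_{k-1,h} + L_{k,h}`, and
`D_{k,0} = D_{k-1,0} + L_{k,0}`. -/
theorem linear_chord_recursion (k : ℕ) (hk : 1 ≤ k) :
    (∀ h : ℕ, 1 ≤ h →
      (∑ᶠ v : ℕ, D k v h) + (∑ᶠ v : ℕ, D (k - 1) v (h - 1)) =
        (∑ᶠ v : ℕ, D (k - 1) v h) + L k h) ∧
    (∑ᶠ v : ℕ, D k v 0) = (∑ᶠ v : ℕ, D (k - 1) v 0) + L k 0 := by
  classical
  obtain ⟨n, rfl⟩ : ∃ n, k = n + 1 := ⟨k - 1, by omega⟩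
  simp only [Nat.add_sub_cancel]
  constructor
  · intro h hh
    obtain ⟨m, rfl⟩ : ∃ m, h = m + 1 := ⟨h - 1, by omega⟩
    rw [finsum_D_succ, L_split]
    simp only [Nat.add_sub_cancel, Nat.add_right_cancel_iff]
    rw [card_lastCol n m, ← finsum_D n m]
    omega
  · rw [finsum_D_succ, L_split]
    simp
end

section
/- Define erfi(x) := (2/√π) ∫₀ˣ e^{t²} dt for x ∈ ℝ. For every real y with 0 ≤ y < 1/2 and every real z with 0 ≤ z ≤ 1, the series Σ_{k≥0} (Σ_{h≥0} Σ_{v≥0} D_{k,v,h} z^h) y^k/k! converges and equals e^{(√(1−2y)−1)(1−z)}/√(1−2y) − e^{(y−2)(1−z)} · √(π/2) · √(1−z) · ( erfi( (√(1−2y)+1)√(1−z)/√2 ) − erfi( √2·√(1−z) ) ). -/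
open Real in
/-- The imaginary error function `erfi(x) = (2/√π) ∫₀ˣ e^{t²} dt`. -/
noncomputable def erfi (x : ℝ) : ℝ := (2 / Real.sqrt π) * ∫ t in (0 : ℝ)..x, Real.exp (t ^ 2)

/-! ### Weighted pairings and matching polynomials of paths -/

section Combinatorics

open scoped Classical in
/-- The partitions of the finite set `A` into pairs, i.e. the perfect matchings of the complete
graph on `A`. -/
noncomputable def pairings {V : Type*} [Fintype V] (A : Finset V) :
    Finset (Finset (Finset V)) :=
  Finset.univ.filter fun P => (∀ p ∈ P, p.card = 2 ∧ p ⊆ A) ∧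
    (∀ p ∈ P, ∀ q ∈ P, p ≠ q → p ∩ q = ∅) ∧ ∀ x ∈ A, ∃ p ∈ P, x ∈ p

open scoped Classical in
/-- The pairings of `A`, each weighted by `z` to the number of its pairs lying in the edge
set `H`. -/
noncomputable def weight {V : Type*} [Fintype V] (z : ℝ) (A : Finset V)
    (H : Finset (Finset V)) : ℝ :=
  ∑ P ∈ pairings A, z ^ (P.filter fun p => p ∈ H).card

open scoped Classical in
theorem mem_pairings {V : Type*} [Fintype V] {A : Finset V} {P : Finset (Finset V)} :
    P ∈ pairings A ↔ (∀ p ∈ P, p.card = 2 ∧ p ⊆ A) ∧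
      (∀ p ∈ P, ∀ q ∈ P, p ≠ q → p ∩ q = ∅) ∧ ∀ x ∈ A, ∃ p ∈ P, x ∈ p := by
  simp only [pairings, Finset.mem_filter, Finset.mem_univ, true_and]

open scoped Classical in
/-- Removing the pair `e` identifies the pairings of `A` that contain `e` with the pairings of
`A \ e`. -/
theorem sum_pairings_erase {V : Type*} [Fintype V] (A e : Finset V) (he : e.card = 2)
    (heA : e ⊆ A) (f : Finset (Finset V) → ℝ) :
    ∑ P ∈ (pairings A).filter (fun P => e ∈ P), f (P.erase e) =
      ∑ Q ∈ pairings (A \ e), f Q := by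
  have hne : e.Nonempty := Finset.card_pos.mp (by omega)
  have key : ∀ Q ∈ pairings (A \ e), e ∉ Q := by
    intro Q hQ heQ
    obtain ⟨x, hx⟩ := hne
    have := ((mem_pairings.mp hQ).1 e heQ).2 hx
    simp [hx] at this
  refine Finset.sum_bij' (fun P _ => P.erase e) (fun Q _ => insert e Q) ?_ ?_ ?_ ?_ ?_
  · intro P hP
    obtain ⟨hP, heP⟩ := Finset.mem_filter.mp hP
    obtain ⟨h1, h2, h3⟩ := mem_pairings.mp hP
    refine mem_pairings.mpr ⟨?_, ?_, ?_⟩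
    · intro p hp
      obtain ⟨hpe, hpP⟩ := Finset.mem_erase.mp hp
      refine ⟨(h1 p hpP).1, ?_⟩
      refine Finset.subset_sdiff.mpr ⟨(h1 p hpP).2, ?_⟩
      exact Finset.disjoint_iff_inter_eq_empty.mpr (h2 p hpP e heP hpe)
    · intro p hp q hq
      exact h2 p (Finset.mem_of_mem_erase hp) q (Finset.mem_of_mem_erase hq)
    · intro x hx
      obtain ⟨hxA, hxe⟩ := Finset.mem_sdiff.mp hx
      obtain ⟨p, hp, hxp⟩ := h3 x hxA
      exact ⟨p, Finset.mem_erase.mpr ⟨fun h => hxe (h ▸ hxp), hp⟩, hxp⟩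
  · intro Q hQ
    obtain ⟨h1, h2, h3⟩ := mem_pairings.mp hQ
    have hdis : ∀ p ∈ Q, p ∩ e = ∅ := fun p hp =>
      Finset.disjoint_iff_inter_eq_empty.mp (Finset.subset_sdiff.mp (h1 p hp).2).2
    refine Finset.mem_filter.mpr ⟨mem_pairings.mpr ⟨?_, ?_, ?_⟩, Finset.mem_insert_self _ _⟩
    · intro p hp
      rcases Finset.mem_insert.mp hp with rfl | hp
      · exact ⟨he, heA⟩
      · exact ⟨(h1 p hp).1, (h1 p hp).2.trans Finset.sdiff_subset⟩
    · intro p hp q hq hpq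
      rcases Finset.mem_insert.mp hp with rfl | hp' <;>
        rcases Finset.mem_insert.mp hq with rfl | hq'
      · exact absurd rfl hpq
      · rw [Finset.inter_comm]; exact hdis q hq'
      · exact hdis p hp'
      · exact h2 p hp' q hq' hpq
    · intro x hx
      by_cases hxe : x ∈ e
      · exact ⟨e, Finset.mem_insert_self _ _, hxe⟩
      · obtain ⟨p, hp, hxp⟩ := h3 x (Finset.mem_sdiff.mpr ⟨hx, hxe⟩)
        exact ⟨p, Finset.mem_insert_of_mem hp, hxp⟩
  · intro P hP
    exact Finset.insert_erase (Finset.mem_filter.mp hP).2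
  · intro Q hQ
    exact Finset.erase_insert (key Q hQ)
  · intro P hP
    rfl

open scoped Classical in
/-- Deletion–contraction: adding an edge `e` to `H` turns the factor `1` into `z` on the
pairings that contain `e`. -/
theorem weight_insert {V : Type*} [Fintype V] (z : ℝ) (A e : Finset V) (he : e.card = 2)
    (heA : e ⊆ A) (H : Finset (Finset V)) (heH : e ∉ H) :
    weight z A (insert e H) = weight z A H - (1 - z) * weight z (A \ e) H := by
  have h0 : weight z (A \ e) H = ∑ P ∈ (pairings A).filter (fun P => e ∈ P),
      z ^ (P.filter fun p => p ∈ H).card := by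
    rw [weight, ← sum_pairings_erase A e he heA]
    refine Finset.sum_congr rfl fun P _ => ?_
    congr 2
    ext p
    simp only [Finset.mem_filter, Finset.mem_erase]
    constructor
    · exact fun h => ⟨h.1.2, h.2⟩
    · exact fun h => ⟨⟨fun hpe => heH (hpe ▸ h.2), h.1⟩, h.2⟩
  rw [h0, weight, weight, Finset.sum_filter, Finset.mul_sum, ← Finset.sum_sub_distrib]
  refine Finset.sum_congr rfl fun P _ => ?_
  by_cases heP : e ∈ P
  · have : (P.filter fun p => p ∈ insert e H) = insert e (P.filter fun p => p ∈ H) := by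
      ext p
      simp only [Finset.mem_filter, Finset.mem_insert]
      constructor
      · rintro ⟨h1, h2 | h2⟩
        · exact Or.inl h2
        · exact Or.inr ⟨h1, h2⟩
      · rintro (rfl | h)
        · exact ⟨heP, Or.inl rfl⟩
        · exact ⟨h.1, Or.inr h.2⟩
    rw [this, Finset.card_insert_of_notMem (by simp [heH]), if_pos heP]
    ring
  · have : (P.filter fun p => p ∈ insert e H) = P.filter fun p => p ∈ H := by
      refine Finset.filter_congr fun p hp => ?_
      rw [Finset.mem_insert]
      exact ⟨fun h => h.resolve_left fun hpe => heP (hpe ▸ hp), Or.inr⟩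
    rw [this, if_neg heP]
    ring

open scoped Classical in
/-- Edges meeting the complement of `A` cannot occur in a pairing of `A`. -/
theorem weight_insert_of_not_subset {V : Type*} [Fintype V] (z : ℝ) (A e : Finset V)
    (heA : ¬ e ⊆ A) (H : Finset (Finset V)) :
    weight z A (insert e H) = weight z A H := by
  refine Finset.sum_congr rfl fun P hP => ?_
  congr 2
  refine Finset.filter_congr fun p hp => ?_
  rw [Finset.mem_insert]
  refine ⟨fun h => h.resolve_left fun hpe => heA (hpe ▸ ((mem_pairings.mp hP).1 p hp).2), Or.inr⟩

/-- The Gaussian moments: `gaussMoment (2 * n) = (2n-1)!!`, and odd moments vanish. -/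
def gaussMoment : ℕ → ℕ
  | 0 => 1
  | 1 => 0
  | n + 2 => (n + 1) * gaussMoment n

open scoped Classical in
theorem card_pairings_rec {V : Type*} [Fintype V] (A : Finset V) (a : V) (ha : a ∈ A) :
    ((pairings A).card : ℝ) = ∑ b ∈ A.erase a, ((pairings (A \ {a, b})).card : ℝ) := by
  have h1 : ∀ b ∈ A.erase a, ((pairings (A \ {a, b})).card : ℝ) =
      ∑ P ∈ pairings A, if ({a, b} : Finset V) ∈ P then (1 : ℝ) else 0 := by
    intro b hb
    obtain ⟨hba, hbA⟩ := Finset.mem_erase.mp hb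
    have := sum_pairings_erase A {a, b} (Finset.card_pair hba.symm)
      (by intro x hx; simp at hx; rcases hx with rfl | rfl <;> assumption) (fun _ => 1)
    rw [← Finset.sum_filter, this]
    simp
  rw [Finset.sum_congr rfl h1, Finset.sum_comm, Finset.cast_card]
  refine Finset.sum_congr rfl fun P hP => ?_
  obtain ⟨h1, h2, h3⟩ := mem_pairings.mp hP
  obtain ⟨p, hp, hap⟩ := h3 a ha
  obtain ⟨b, hab, rfl⟩ : ∃ b, a ≠ b ∧ p = {a, b} := by
    obtain ⟨x, y, hxy, rfl⟩ := Finset.card_eq_two.mp (h1 p hp).1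
    rcases Finset.mem_insert.mp hap with rfl | h
    · exact ⟨y, hxy, rfl⟩
    · rw [Finset.mem_singleton] at h
      subst h
      exact ⟨x, hxy.symm, Finset.pair_comm _ _⟩
  have hbA : b ∈ A.erase a := Finset.mem_erase.mpr ⟨hab.symm, (h1 _ hp).2 (by simp)⟩
  rw [Finset.sum_eq_single_of_mem b hbA, if_pos hp]
  intro c hc hcb
  rw [if_neg]
  intro hcP
  have hne : ({a, b} : Finset V) ≠ {a, c} := by
    intro h
    have : b ∈ ({a, c} : Finset V) := h ▸ (by simp)
    simp only [Finset.mem_insert, Finset.mem_singleton] at this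
    rcases this with h | h
    · exact hab h.symm
    · exact hcb h.symm
  have := h2 _ hp _ hcP hne
  have h4 : a ∈ ({a, b} : Finset V) ∩ {a, c} := by simp
  rw [this] at h4
  simp at h4

open scoped Classical in
theorem card_pairings {V : Type*} [Fintype V] (n : ℕ) :
    ∀ A : Finset V, A.card = n → ((pairings A).card : ℝ) = gaussMoment n := by
  induction n using Nat.strong_induction_on with
  | _ n ih =>
    intro A hA
    match n with
    | 0 =>
      rw [Finset.card_eq_zero] at hA
      subst hA
      have : pairings (∅ : Finset V) = {∅} := by
        ext P
        rw [mem_pairings, Finset.mem_singleton]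
        constructor
        · rintro ⟨h1, -, -⟩
          refine Finset.eq_empty_of_forall_notMem fun p hp => ?_
          obtain ⟨h, h'⟩ := h1 p hp
          rw [Finset.subset_empty] at h'
          simp [h'] at h
        · rintro rfl
          simp
      simp [this, gaussMoment]
    | 1 =>
      obtain ⟨a, rfl⟩ := Finset.card_eq_one.mp hA
      rw [card_pairings_rec _ a (by simp)]
      simp [gaussMoment]
    | m + 2 =>
      obtain ⟨a, ha⟩ : A.Nonempty := Finset.card_pos.mp (by omega)
      rw [card_pairings_rec A a ha]
      have : ∀ b ∈ A.erase a, ((pairings (A \ {a, b})).card : ℝ) = gaussMoment m := by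
        intro b hb
        obtain ⟨hba, hbA⟩ := Finset.mem_erase.mp hb
        refine ih m (by omega) _ ?_
        rw [Finset.card_sdiff_of_subset
          (by intro x hx; simp at hx; rcases hx with rfl | rfl <;> assumption),
          Finset.card_pair hba.symm]
        omega
      rw [Finset.sum_congr rfl this, Finset.sum_const, Finset.card_erase_of_mem ha, hA]
      simp [gaussMoment]

open Polynomial

/-- The linear functional `X ^ n ↦ gaussMoment n`, i.e. the expectation of a polynomial in a
standard Gaussian variable. -/
noncomputable def gaussE : ℝ[X] →ₗ[ℝ] ℝ :=
  Polynomial.lsum fun n => (gaussMoment n : ℝ) • LinearMap.id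

theorem gaussE_X_pow (n : ℕ) : gaussE (X ^ n) = gaussMoment n := by
  rw [gaussE, Polynomial.lsum_apply, ← Polynomial.monomial_one_right_eq_X_pow,
    Polynomial.sum_monomial_index] <;> simp

theorem gaussE_C_mul (c : ℝ) (p : ℝ[X]) : gaussE (C c * p) = c * gaussE p := by
  rw [← Polynomial.smul_eq_C_mul, map_smul, smul_eq_mul]

/-- The matching polynomial of the path on `n` vertices with edge weight `w`. -/
noncomputable def pathPoly (w : ℝ) : ℕ → ℝ[X]
  | 0 => 1
  | 1 => X
  | n + 2 => X * pathPoly w (n + 1) - C w * pathPoly w n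

/-- Cutting the path on `m + n + 2` vertices at the edge between its first `m + 1` and its last
`n + 1` vertices. -/
theorem pathPoly_add (w : ℝ) (m : ℕ) : ∀ n, pathPoly w (m + n + 2) =
    pathPoly w (m + 1) * pathPoly w (n + 1) - C w * (pathPoly w m * pathPoly w n)
  | 0 => by simp [pathPoly]; ring
  | 1 => by
      simp only [pathPoly]; ring
  | n + 2 => by
      have h1 := pathPoly_add w m n
      have h2 := pathPoly_add w m (n + 1)
      have e1 : pathPoly w (m + (n + 2) + 2) =
        X * pathPoly w (m + (n + 1) + 2) - C w * pathPoly w (m + n + 2) := rfl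
      have e2 : pathPoly w (n + 2 + 1) = X * pathPoly w (n + 1 + 1) - C w * pathPoly w (n + 1) :=
        rfl
      have e3 : pathPoly w (n + 2) = X * pathPoly w (n + 1) - C w * pathPoly w n := rfl
      rw [e1, h1, h2, e2, e3]
      ring

open scoped Classical in
/-- The edges joining consecutive entries of a list of vertices. -/
noncomputable def pathEdges {V : Type*} : List V → Finset (Finset V)
  | [] => ∅
  | [_] => ∅
  | a :: b :: l => insert {a, b} (pathEdges (b :: l))

open scoped Classical in
theorem subset_of_mem_pathEdges {V : Type*} : ∀ (l : List V) (p : Finset V),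
    p ∈ pathEdges l → ∀ x ∈ p, x ∈ l
  | [], p, h => by simp [pathEdges] at h
  | [_], p, h => by simp [pathEdges] at h
  | a :: b :: l, p, h => by
      intro x hx
      rcases Finset.mem_insert.mp h with rfl | h
      · simp only [Finset.mem_insert, Finset.mem_singleton] at hx
        rcases hx with rfl | rfl <;> simp
      · exact List.mem_cons_of_mem _ (subset_of_mem_pathEdges (b :: l) p h x hx)

open scoped Classical in
theorem mem_pathEdges {V : Type*} : ∀ (l : List V) (p : Finset V),
    p ∈ pathEdges l ↔ ∃ (j : ℕ) (h : j + 1 < l.length), p = {l[j], l[j + 1]}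
  | [], p => by simp [pathEdges]
  | [_], p => by simp [pathEdges]
  | a :: b :: l, p => by
      rw [pathEdges, Finset.mem_insert, mem_pathEdges (b :: l) p]
      constructor
      · rintro (rfl | ⟨j, h, rfl⟩)
        · exact ⟨0, by simp, rfl⟩
        · exact ⟨j + 1, by simpa using h, rfl⟩
      · rintro ⟨j, h, rfl⟩
        cases j with
        | zero => exact Or.inl rfl
        | succ j => exact Or.inr ⟨j, by simpa using h, rfl⟩

open scoped Classical in
/-- Attaching a disjoint path `l` to a graph `H` on the vertex set `B` multiplies the polynomial
representing the weights by the matching polynomial of the path. Vertices of `A` outside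
`B` and `l` are isolated and contribute a factor `X` each. -/
theorem weight_union_path {V : Type*} [Fintype V] (z : ℝ) (B : Finset V)
    (H : Finset (Finset V)) (hHB : ∀ p ∈ H, p ⊆ B) (G : ℝ[X])
    (hG : ∀ A, B ⊆ A → weight z A H = gaussE (G * X ^ (A.card - B.card))) :
    ∀ (l : List V), l.Nodup → (∀ x ∈ l, x ∉ B) → ∀ A, B ⊆ A → (∀ x ∈ l, x ∈ A) →
      weight z A (pathEdges l ∪ H) =
        gaussE (G * pathPoly (1 - z) l.length * X ^ (A.card - B.card - l.length))
  | [], _, _, A, hBA, _ => by simp [pathEdges, pathPoly, hG A hBA]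
  | [a], _, hd, A, hBA, hlA => by
      have hlt : B.card < A.card := Finset.card_lt_card
        ⟨hBA, fun h => hd a (by simp) (h (hlA a (by simp)))⟩
      have e : A.card - B.card = (A.card - B.card - 1) + 1 := by omega
      simp only [pathEdges, Finset.empty_union, List.length_singleton, pathPoly]
      rw [hG A hBA]
      conv_lhs => rw [e, pow_succ']
      rw [mul_assoc]
  | a :: b :: l, hn, hd, A, hBA, hlA => by
      have hnb : (b :: l).Nodup := (List.nodup_cons.mp hn).2
      have hal : a ∉ b :: l := (List.nodup_cons.mp hn).1
      have hnl : l.Nodup := (List.nodup_cons.mp hnb).2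
      have hbl : b ∉ l := (List.nodup_cons.mp hnb).1
      have hab : a ≠ b := fun h => hal (h ▸ by simp)
      have haB : a ∉ B := hd a (by simp)
      have hbB : b ∉ B := hd b (by simp)
      have heA : ({a, b} : Finset V) ⊆ A := by
        intro x hx
        simp only [Finset.mem_insert, Finset.mem_singleton] at hx
        rcases hx with rfl | rfl <;> exact hlA _ (by simp)
      have heH : ({a, b} : Finset V) ∉ pathEdges (b :: l) ∪ H := by
        intro h
        rcases Finset.mem_union.mp h with h | h
        · exact hal (subset_of_mem_pathEdges _ _ h a (by simp))
        · exact haB (hHB _ h (by simp))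
      have hBA' : B ⊆ A \ {a, b} := by
        intro x hx
        simp only [Finset.mem_sdiff, Finset.mem_insert, Finset.mem_singleton, not_or]
        exact ⟨hBA hx, fun h => haB (h ▸ hx), fun h => hbB (h ▸ hx)⟩
      have hlA' : ∀ x ∈ l, x ∈ A \ {a, b} := by
        intro x hx
        simp only [Finset.mem_sdiff, Finset.mem_insert, Finset.mem_singleton, not_or]
        exact ⟨hlA x (by simp [hx]), fun h => hal (h ▸ by simp [hx]), fun h => hbl (h ▸ hx)⟩
      have hcard : (A \ {a, b}).card = A.card - 2 := by
        rw [Finset.card_sdiff_of_subset heA, Finset.card_pair hab]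
      have hcount : B.card + (l.length + 2) ≤ A.card := by
        have h1 : B ∪ (a :: b :: l).toFinset ⊆ A := by
          intro x hx
          rcases Finset.mem_union.mp hx with hx | hx
          · exact hBA hx
          · exact hlA x (List.mem_toFinset.mp hx)
        have h2 := Finset.card_le_card h1
        rw [Finset.card_union_of_disjoint, List.toFinset_card_of_nodup hn] at h2
        · simpa using h2
        · rw [Finset.disjoint_right]
          exact fun x hx => hd x (List.mem_toFinset.mp hx)
      -- after `a` and `b` are removed, the edge leaving `b` is no longer available
      have hdrop : weight z (A \ {a, b}) (pathEdges (b :: l) ∪ H) =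
          weight z (A \ {a, b}) (pathEdges l ∪ H) := by
        cases l with
        | nil => rfl
        | cons c l =>
          rw [pathEdges, Finset.insert_union, weight_insert_of_not_subset]
          intro h
          have : b ∈ A \ {a, b} := h (by simp)
          simp at this
      have ih1 := weight_union_path z B H hHB G hG (b :: l) hnb
        (fun x hx => hd x (List.mem_cons_of_mem _ hx)) A hBA
        (fun x hx => hlA x (List.mem_cons_of_mem _ hx))
      have ih2 := weight_union_path z B H hHB G hG l hnl
        (fun x hx => hd x (by simp [hx])) (A \ {a, b}) hBA' hlA'
      rw [pathEdges, Finset.insert_union,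
        weight_insert z A _ (Finset.card_pair hab) heA _ heH, hdrop, ih1, ih2, hcard,
        ← gaussE_C_mul, ← map_sub]
      congr 1
      simp only [List.length_cons, pathPoly]
      have e1 : A.card - B.card - (l.length + 1) = A.card - B.card - (l.length + 1 + 1) + 1 := by
        omega
      have e2 : A.card - 2 - B.card - l.length = A.card - B.card - (l.length + 1 + 1) := by omega
      rw [e1, e2]
      ring

open scoped Classical in
theorem weight_union_eq {V : Type*} [Fintype V] (z : ℝ) (A : Finset V)
    (H₁ H₂ : Finset (Finset V)) (Q : Finset V → Prop)
    (h : ∀ p, (p ∈ H₁ ∨ p ∈ H₂) ↔ Q p) :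
    weight z A (H₁ ∪ H₂) = ∑ P ∈ pairings A, z ^ (P.filter fun p => Q p).card := by
  refine Finset.sum_congr rfl fun P _ => ?_
  congr 2
  refine Finset.filter_congr fun p _ => ?_
  rw [Finset.mem_union, h]

open scoped Classical in
theorem weight_empty {V : Type*} [Fintype V] (z : ℝ) (A : Finset V) :
    weight z A ∅ = gaussE (X ^ A.card) := by
  rw [gaussE_X_pow, ← card_pairings _ A rfl]
  simp [weight]

/-- The cells of row `i`, from left to right. -/
def row (k : ℕ) (i : Fin 2) : List (Cell k) := (List.finRange k).map fun j => (i, j)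

open scoped Classical in
theorem mem_pathEdges_rows {k : ℕ} (p : Finset (Cell k)) :
    (p ∈ pathEdges (row k 0) ∨ p ∈ pathEdges (row k 1)) ↔ IsHoriz p := by
  have key : ∀ i : Fin 2, p ∈ pathEdges (row k i) ↔
      ∃ j j' : Fin k, (j' : ℕ) = (j : ℕ) + 1 ∧ p = {(i, j), (i, j')} := by
    intro i
    rw [mem_pathEdges]
    constructor
    · rintro ⟨j, h, rfl⟩
      have h' : j + 1 < k := by simpa [row] using h
      exact ⟨⟨j, by omega⟩, ⟨j + 1, h'⟩, rfl, by ext x; simp [row]⟩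
    · rintro ⟨j, j', h, rfl⟩
      have h' : (j : ℕ) + 1 < k := h ▸ j'.2
      refine ⟨j, by simpa [row] using h', ?_⟩
      have : j' = ⟨(j : ℕ) + 1, h'⟩ := Fin.ext h
      subst this
      ext x
      simp [row]
  rw [key, key, IsHoriz]
  constructor
  · rintro (h | h)
    · exact ⟨0, h⟩
    · exact ⟨1, h⟩
  · rintro ⟨i, h⟩
    fin_cases i
    · exact Or.inl h
    · exact Or.inr h

open scoped Classical in
/-- Weighting all configurations by `z ^ h` gives the Gaussian expectation of the matching
polynomial of the two rows. -/
theorem sum_horiz_eq (k : ℕ) (z : ℝ) :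
    ∑ P ∈ pairings (Finset.univ : Finset (Cell k)), z ^ (P.filter fun p => IsHoriz p).card =
      gaussE (pathPoly (1 - z) k ^ 2) := by
  have hnodup : ∀ i, (row k i).Nodup := fun i =>
    (List.nodup_finRange k).map fun a b h => (Prod.ext_iff.mp h).2
  have hlen : ∀ i, (row k i).length = k := fun i => by simp [row]
  have hmem : ∀ i (x : Cell k), x ∈ row k i ↔ x.1 = i := by
    rintro i ⟨x1, x2⟩
    simp [row, eq_comm]
  have h1 : ∀ A, (row k 1).toFinset ⊆ A → weight z A (pathEdges (row k 1)) =
      gaussE (pathPoly (1 - z) k * X ^ (A.card - (row k 1).toFinset.card)) := by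
    intro A hA
    have := weight_union_path z (∅ : Finset (Cell k)) ∅ (by simp) 1
      (fun A _ => by simpa using weight_empty z A) (row k 1) (hnodup 1) (by simp) A (by simp)
      (fun x hx => hA (List.mem_toFinset.mpr hx))
    simpa [hlen, List.toFinset_card_of_nodup (hnodup 1)] using this
  have h2 := weight_union_path z (row k 1).toFinset (pathEdges (row k 1))
    (fun p hp x hx => List.mem_toFinset.mpr (subset_of_mem_pathEdges _ p hp x hx)) _ h1
    (row k 0) (hnodup 0)
    (fun x hx h => by
      rw [List.mem_toFinset, hmem] at h
      rw [hmem] at hx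
      simp [hx] at h)
    Finset.univ (by simp) (by simp)
  rw [List.toFinset_card_of_nodup (hnodup 1), hlen, hlen] at h2
  have h3 : (Finset.univ : Finset (Cell k)).card - k - k = 0 := by simp [two_mul]
  rw [h3, pow_zero, mul_one, ← pow_two] at h2
  rw [← h2, weight_union_eq _ _ _ _ _ mem_pathEdges_rows]

theorem mem_pairings_univ {k : ℕ} (P : Finset (Finset (Cell k))) :
    P ∈ pairings Finset.univ ↔ IsPairPartition P := by
  classical
  rw [mem_pairings, IsPairPartition]
  refine and_congr ?_ (and_congr ?_ ?_)
  · simp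
  -- the two sides carry different decidability instances inside `∩`
  · refine forall₂_congr fun p _ => forall₂_congr fun q _ => imp_congr_right fun _ => ?_
    rw [Finset.eq_empty_iff_forall_notMem, Finset.eq_empty_iff_forall_notMem]
    simp
  · simp

open scoped Classical in
theorem finsum_D_eq (k : ℕ) (z : ℝ) :
    ∑ᶠ h : ℕ, (∑ᶠ v : ℕ, (D k v h : ℝ)) * z ^ h =
      ∑ P ∈ pairings (Finset.univ : Finset (Cell k)), z ^ (P.filter fun p => IsHoriz p).card := by
  set S := pairings (Finset.univ : Finset (Cell k)) with hS
  set v : Finset (Finset (Cell k)) → ℕ := fun P => (P.filter fun p => IsVert p).card with hv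
  set h : Finset (Finset (Cell k)) → ℕ := fun P => (P.filter fun p => IsHoriz p).card with hh
  have hD : ∀ a b, (D k a b : ℝ) = ∑ P ∈ S, if v P = a ∧ h P = b then 1 else 0 := by
    intro a b
    rw [← Finset.sum_filter, ← Finset.cast_card, D]
    congr 2
    ext P
    rw [Finset.mem_filter, Finset.mem_filter, mem_pairings_univ]
    simp [v, h]
  have h1 : ∀ b, ∑ᶠ a, (D k a b : ℝ) = ∑ P ∈ S, if h P = b then 1 else 0 := by
    intro b
    rw [finsum_eq_sum_of_support_subset (s := S.image v)]
    · simp_rw [hD]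
      rw [Finset.sum_comm]
      refine Finset.sum_congr rfl fun P hP => ?_
      rw [Finset.sum_eq_single_of_mem (v P) (Finset.mem_image_of_mem _ hP)]
      · simp
      · intro a _ ha
        rw [if_neg fun h => ha h.1.symm]
    · intro a ha
      by_contra hcon
      refine ha ?_
      simp only
      rw [hD]
      refine Finset.sum_eq_zero fun P hP => if_neg fun h => hcon ?_
      rw [← h.1]
      exact Finset.mem_coe.mpr (Finset.mem_image_of_mem _ hP)
  simp_rw [h1]
  rw [finsum_eq_sum_of_support_subset (s := S.image h)]
  · simp_rw [Finset.sum_mul]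
    rw [Finset.sum_comm]
    refine Finset.sum_congr rfl fun P hP => ?_
    rw [Finset.sum_eq_single_of_mem (h P) (Finset.mem_image_of_mem _ hP)]
    · rw [if_pos rfl, one_mul]
    · intro a _ ha
      rw [if_neg fun h => ha h.symm, zero_mul]
  · intro a ha
    by_contra hcon
    refine ha ?_
    simp only
    rw [Finset.sum_eq_zero, zero_mul]
    refine fun P hP => if_neg fun h => hcon ?_
    rw [← h]
    exact Finset.mem_coe.mpr (Finset.mem_image_of_mem _ hP)

end Combinatorics

/-! ### Power series for a single path -/

section Series

open Polynomial

theorem pathPoly_eq_sum (w : ℝ) : ∀ n, pathPoly w n =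
    ∑ x ∈ Finset.HasAntidiagonal.antidiagonal n, C ((x.1.choose x.2 : ℝ) * (-w) ^ x.2) * X ^ (x.1 - x.2)
  | 0 => by simp [pathPoly]
  | 1 => by simp [pathPoly, Finset.Nat.antidiagonal_succ]
  | n + 2 => by
      rw [pathPoly, pathPoly_eq_sum w (n + 1), pathPoly_eq_sum w n,
        Finset.Nat.antidiagonal_succ_succ', Finset.sum_cons, Finset.sum_cons, Finset.sum_map,
        Finset.Nat.sum_antidiagonal_succ', mul_add, Finset.mul_sum, Finset.mul_sum, add_sub_assoc,
        ← Finset.sum_sub_distrib]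
      have h : ∀ x ∈ Finset.HasAntidiagonal.antidiagonal n,
          X * (C ((x.1.choose (x.2 + 1) : ℝ) * (-w) ^ (x.2 + 1)) * X ^ (x.1 - (x.2 + 1))) -
            C w * (C ((x.1.choose x.2 : ℝ) * (-w) ^ x.2) * X ^ (x.1 - x.2)) =
          C (((x.1 + 1).choose (x.2 + 1) : ℝ) * (-w) ^ (x.2 + 1)) *
            X ^ ((x.1 + 1) - (x.2 + 1)) := by
        rintro ⟨i, j⟩ -
        simp only [Nat.add_sub_add_right]
        rw [Nat.choose_succ_succ]
        by_cases hij : j + 1 ≤ i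
        · have e : i - j = i - (j + 1) + 1 := by omega
          rw [e]
          simp only [Nat.succ_eq_add_one, Nat.cast_add, map_mul, map_add, map_pow, map_neg]
          ring
        · rw [Nat.choose_eq_zero_of_lt (by omega : i < j + 1)]
          simp only [Nat.cast_add, map_mul, map_add, map_pow, map_neg, Nat.cast_zero, map_zero]
          ring
      rw [Finset.sum_congr rfl h]
      simp [pow_succ]
      ring

theorem gaussE_pathPoly_two_mul (w : ℝ) (k : ℕ) : gaussE (pathPoly w (2 * k)) =
    ∑ a ∈ Finset.range (2 * k + 1),
      ((2 * k - a).choose a : ℝ) * (-w) ^ a * gaussMoment (2 * k - a - a) := by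
  rw [pathPoly_eq_sum, map_sum, ← Finset.Nat.sum_antidiagonal_swap,
    Finset.Nat.sum_antidiagonal_eq_sum_range_succ_mk]
  refine Finset.sum_congr rfl fun a _ => ?_
  simp only [Prod.swap]
  rw [gaussE_C_mul, gaussE_X_pow]

theorem gaussMoment_two_mul (m : ℕ) : gaussMoment (2 * m) * (2 ^ m * m.factorial) =
    (2 * m).factorial := by
  induction m with
  | zero => rfl
  | succ m ih =>
    have e : gaussMoment (2 * (m + 1)) = (2 * m + 1) * gaussMoment (2 * m) := rfl
    have e2 : (2 * (m + 1)).factorial = (2 * m + 2) * ((2 * m + 1) * (2 * m).factorial) := rfl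
    rw [e, e2, ← ih, Nat.factorial_succ]
    ring

/-- The coefficient of `y ^ k` in `(1 - √(1 - 2y)) ^ a / √(1 - 2y)`. -/
noncomputable def ballot (a k : ℕ) : ℝ :=
  if a ≤ k then ((2 * k - a).choose k : ℝ) * 2 ^ a / 2 ^ k else 0

theorem ballot_nonneg (a k : ℕ) : 0 ≤ ballot a k := by
  unfold ballot
  split_ifs <;> positivity

theorem ballot_zero_eq (k : ℕ) : ballot 0 k = gaussMoment (2 * k) / k.factorial := by
  have h1 : ((2 * k).choose k : ℝ) * k.factorial * k.factorial = (2 * k).factorial := by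
    have := Nat.choose_mul_factorial_mul_factorial (show k ≤ 2 * k by omega)
    rw [show 2 * k - k = k by omega] at this
    exact_mod_cast this
  have h2 : (gaussMoment (2 * k) : ℝ) * (2 ^ k * k.factorial) = (2 * k).factorial := by
    exact_mod_cast gaussMoment_two_mul k
  have hk : (k.factorial : ℝ) ≠ 0 := by positivity
  simp only [ballot, zero_le, if_true, Nat.sub_zero, pow_zero, mul_one]
  rw [div_eq_div_iff (by positivity) hk]
  apply mul_right_cancel₀ hk
  linarith

/-- Up to factorials, `ballot a k` is the contribution to `E[F_{2k}]` of the matchings with `a`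
edges in the path on `2 * k` vertices. -/
theorem ballot_eq (a k : ℕ) (ha : a ≤ k) :
    ballot a k / a.factorial =
      ((2 * k - a).choose a : ℝ) * gaussMoment (2 * k - a - a) / k.factorial := by
  obtain ⟨m, rfl⟩ := Nat.exists_eq_add_of_le ha
  have e1 : 2 * (a + m) - a = a + 2 * m := by omega
  have e2 : a + 2 * m - a = 2 * m := by omega
  have h1 : ((a + 2 * m).choose (a + m) : ℝ) * (a + m).factorial * m.factorial =
      (a + 2 * m).factorial := by
    have := Nat.choose_mul_factorial_mul_factorial (show a + m ≤ a + 2 * m by omega)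
    rw [show a + 2 * m - (a + m) = m by omega] at this
    exact_mod_cast this
  have h2 : ((a + 2 * m).choose a : ℝ) * a.factorial * (2 * m).factorial =
      (a + 2 * m).factorial := by
    have := Nat.choose_mul_factorial_mul_factorial (show a ≤ a + 2 * m by omega)
    rw [e2] at this
    exact_mod_cast this
  have h3 : (gaussMoment (2 * m) : ℝ) * (2 ^ m * m.factorial) = (2 * m).factorial := by
    exact_mod_cast gaussMoment_two_mul m
  rw [ballot, if_pos ha, e1, e2, pow_add]
  have hm : (m.factorial : ℝ) ≠ 0 := by positivity
  have : ((a + 2 * m).choose (a + m) : ℝ) * 2 ^ a / (2 ^ a * 2 ^ m) =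
      ((a + 2 * m).choose (a + m) : ℝ) / 2 ^ m := by
    field_simp
  rw [this, div_div, div_eq_div_iff (by positivity) (by positivity)]
  apply mul_right_cancel₀ hm
  rw [h1, ← h2, ← h3]
  ring

/-- Pascal's rule, matching `(1 - s) ^ 2 = 2 * (1 - s) - 2 * y` for `s = √(1 - 2y)`. -/
theorem ballot_rec (a k : ℕ) :
    ballot (a + 2) (k + 1) = 2 * ballot (a + 1) (k + 1) - 2 * ballot a k := by
  unfold ballot
  rcases lt_trichotomy a k with h | rfl | h
  · rw [if_pos (by omega), if_pos (by omega), if_pos (by omega)]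
    rw [show 2 * (k + 1) - (a + 2) = 2 * k - a by omega,
      show 2 * (k + 1) - (a + 1) = (2 * k - a) + 1 by omega, Nat.choose_succ_succ]
    push_cast
    field_simp
    ring
  · rw [if_neg (by omega), if_pos (by omega), if_pos (by omega)]
    rw [show 2 * (a + 1) - (a + 1) = a + 1 by omega, show 2 * a - a = a by omega]
    simp
  · rw [if_neg (by omega), if_neg (by omega), if_neg (by omega)]
    simp

theorem hasSum_ballot_zero (y : ℝ) (hy0 : 0 ≤ y) (hy : y < 1 / 2) :
    HasSum (fun k => ballot 0 k * y ^ k) (1 / √(1 - 2 * y)) := by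
  have h := (Real.one_add_rpow_hasFPowerSeriesOnBall_zero (a := -(1 / 2))).hasSum
    (y := -(2 * y)) (by
      rw [Metric.mem_eball, edist_zero_right, ← ofReal_norm, norm_neg,
        Real.norm_of_nonneg (by positivity)]
      exact ENNReal.ofReal_lt_one.mpr (by linarith))
  simp only [zero_add, binomialSeries_apply, List.ofFn_const, List.prod_replicate,
    smul_eq_mul] at h
  have hval : (1 + -(2 * y)) ^ (-(1 / 2) : ℝ) = 1 / √(1 - 2 * y) := by
    rw [Real.rpow_neg (by linarith), Real.sqrt_eq_rpow, ← sub_eq_add_neg, one_div (_ ^ _)]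
  rw [hval] at h
  have hcoeff : ∀ k, ballot 0 k * y ^ k = Ring.choose (-(1 / 2) : ℝ) k * (-(2 * y)) ^ k := by
    intro k
    induction k with
    | zero => simp [ballot]
    | succ k ih =>
      have h1 : ballot 0 (k + 1) = (2 * k + 1) / (k + 1) * ballot 0 k := by
        have e : gaussMoment (2 * (k + 1)) = (2 * k + 1) * gaussMoment (2 * k) := rfl
        rw [ballot_zero_eq, ballot_zero_eq, e, Nat.factorial_succ]
        push_cast
        field_simp
      have h2 := Ring.choose_smul_choose (-(1 / 2) : ℝ) (Nat.le_succ k)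
      rw [Nat.succ_eq_add_one, Nat.choose_succ_self_right, Nat.add_sub_cancel_left,
        Ring.choose_one_right, nsmul_eq_mul] at h2
      push_cast at h2
      have hk : (k : ℝ) + 1 ≠ 0 := by positivity
      have h3 : Ring.choose (-(1 / 2) : ℝ) (k + 1) =
          Ring.choose (-(1 / 2) : ℝ) k * (-(1 / 2) - k) / (k + 1) := by
        rw [eq_div_iff hk, ← h2]
        ring
      rw [h1, h3, pow_succ, pow_succ]
      calc _ = (2 * k + 1) / (k + 1) * y * (ballot 0 k * y ^ k) := by ring
        _ = _ := by rw [ih]; field_simp; ring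
  simpa only [hcoeff] using h

theorem hasSum_ballot (y : ℝ) (hy0 : 0 ≤ y) (hy : y < 1 / 2) : ∀ a,
    HasSum (fun k => ballot a k * y ^ k) ((1 - √(1 - 2 * y)) ^ a / √(1 - 2 * y))
  | 0 => by simpa using hasSum_ballot_zero y hy0 hy
  | 1 => by
      have hs : √(1 - 2 * y) ≠ 0 := (Real.sqrt_pos.mpr (by linarith)).ne'
      have h := (hasSum_ballot_zero y hy0 hy).sub (hasSum_ite_eq 0 (1 : ℝ))
      have e : (1 - √(1 - 2 * y)) ^ 1 / √(1 - 2 * y) = 1 / √(1 - 2 * y) - 1 := by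
        field_simp
      rw [e]
      refine (funext fun k => ?_ : (fun k => ballot 1 k * y ^ k) = _) ▸ h
      cases k with
      | zero => simp [ballot]
      | succ k =>
        simp only [ballot, Nat.sub_zero, if_pos (Nat.zero_le _), if_neg (Nat.succ_ne_zero k),
          if_pos (Nat.succ_le_succ (Nat.zero_le k)), sub_zero, pow_zero]
        have h1 : (2 * (k + 1)).choose (k + 1) = 2 * (2 * (k + 1) - 1).choose (k + 1) := by
          rw [show 2 * (k + 1) = (2 * k + 1) + 1 by ring, Nat.choose_succ_succ,
            Nat.add_sub_cancel, Nat.choose_symm_half]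
          ring
        rw [h1]
        push_cast
        ring
  | a + 2 => by
      have hs : √(1 - 2 * y) ≠ 0 := (Real.sqrt_pos.mpr (by linarith)).ne'
      have hs2 : √(1 - 2 * y) ^ 2 = 1 - 2 * y := Real.sq_sqrt (by linarith)
      rw [← hasSum_nat_add_iff' 1]
      have h1 := (hasSum_nat_add_iff' 1).mpr (hasSum_ballot y hy0 hy (a + 1))
      have h := (h1.mul_left 2).sub ((hasSum_ballot y hy0 hy a).mul_left (2 * y))
      convert h using 1
      · ext k
        rw [ballot_rec]
        ring
      · simp only [Finset.sum_range_one, ballot, pow_zero, mul_one]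
        rw [if_neg (by omega), if_neg (by omega)]
        generalize √(1 - 2 * y) = s at hs hs2
        rw [show y = (1 - s ^ 2) / 2 by rw [hs2]; ring]
        field_simp
        ring

/-- The exponential generating function of the expectations of the path polynomials on `2 * k`
vertices, obtained by expanding `exp (-w * (1 - s)) / s` in powers of `1 - s`. -/
theorem hasSum_path (w y : ℝ) (hw : 0 ≤ w) (hy0 : 0 ≤ y) (hy : y < 1 / 2) :
    HasSum (fun k : ℕ => gaussE (pathPoly w (2 * k)) * y ^ k / k.factorial)
      (Real.exp ((√(1 - 2 * y) - 1) * w) / √(1 - 2 * y)) := by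
  set s := √(1 - 2 * y) with hs
  have hexp : ∀ x : ℝ, HasSum (fun a : ℕ => x ^ a / a.factorial * ((1 - s) ^ a / s))
      (Real.exp (x * (1 - s)) / s) := by
    intro x
    have h := (NormedSpace.expSeries_div_hasSum_exp (x * (1 - s))).div_const s
    rw [← Real.exp_eq_exp_ℝ] at h
    refine (funext fun a => ?_ :
      (fun a : ℕ => x ^ a / a.factorial * ((1 - s) ^ a / s)) = _) ▸ h
    rw [mul_pow]
    ring
  have hinner : ∀ (x : ℝ) (a : ℕ), HasSum (fun k => x ^ a / a.factorial * (ballot a k * y ^ k))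
      (x ^ a / a.factorial * ((1 - s) ^ a / s)) := fun x a =>
    (hasSum_ballot y hy0 hy a).mul_left _
  have habs : Summable fun p : ℕ × ℕ =>
      w ^ p.1 / p.1.factorial * (ballot p.1 p.2 * y ^ p.2) := by
    rw [summable_prod_of_nonneg]
    · refine ⟨fun a => (hinner w a).summable, ?_⟩
      simp_rw [fun a => (hinner w a).tsum_eq]
      exact (hexp w).summable
    · intro p
      have := ballot_nonneg p.1 p.2
      simp only [Pi.zero_apply]
      positivity
  have hsum : Summable fun p : ℕ × ℕ =>
      (-w) ^ p.1 / p.1.factorial * (ballot p.1 p.2 * y ^ p.2) := by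
    refine Summable.of_norm_bounded habs fun p => le_of_eq ?_
    have := ballot_nonneg p.1 p.2
    rw [norm_mul, norm_div, norm_pow, norm_neg, Real.norm_of_nonneg hw,
      Real.norm_of_nonneg (by positivity : (0 : ℝ) ≤ p.1.factorial),
      Real.norm_of_nonneg (by positivity : 0 ≤ ballot p.1 p.2 * y ^ p.2)]
  have htot := (hsum.hasSum.prod_fiberwise (hinner (-w))).unique (hexp (-w))
  have h := hsum.hasSum
  rw [htot, ← (Equiv.prodComm ℕ ℕ).hasSum_iff] at h
  have e : (s - 1) * w = -w * (1 - s) := by ring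
  rw [e]
  refine h.prod_fiberwise fun k => ?_
  have hval : gaussE (pathPoly w (2 * k)) * y ^ k / k.factorial =
      ∑ a ∈ Finset.range (2 * k + 1), (-w) ^ a / a.factorial * (ballot a k * y ^ k) := by
    rw [gaussE_pathPoly_two_mul, Finset.sum_mul, Finset.sum_div]
    refine Finset.sum_congr rfl fun a ha => ?_
    by_cases hak : a ≤ k
    · have := ballot_eq a k hak
      calc _ = (-w) ^ a * y ^ k * (((2 * k - a).choose a : ℝ) * gaussMoment (2 * k - a - a)
            / k.factorial) := by ring
        _ = _ := by rw [← this]; ring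
    · rw [ballot, if_neg hak, Nat.choose_eq_zero_of_lt (by omega)]
      simp
  rw [hval]
  refine hasSum_sum_of_ne_finset_zero fun a ha => ?_
  have : ¬ a ≤ k := by
    rw [Finset.mem_range] at ha
    omega
  simp [ballot, if_neg this]

end Series

/-! ### The differential equation -/

section Equation

open Polynomial

theorem gaussE_sq_succ (w : ℝ) (k : ℕ) : gaussE (pathPoly w (k + 1) ^ 2) =
    gaussE (pathPoly w (2 * (k + 1))) + w * gaussE (pathPoly w k ^ 2) := by
  rw [show 2 * (k + 1) = k + k + 2 by ring, pathPoly_add, map_sub, gaussE_C_mul, ← pow_two,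
    ← pow_two]
  ring

/-- For `0 ≤ z ≤ 1` every configuration has weight at most `1`. -/
theorem abs_gaussE_sq_le (z : ℝ) (hz0 : 0 ≤ z) (hz1 : z ≤ 1) (k : ℕ) :
    |gaussE (pathPoly (1 - z) k ^ 2)| ≤ gaussMoment (2 * k) := by
  classical
  rw [← sum_horiz_eq, ← card_pairings (2 * k) (Finset.univ : Finset (Cell k)) (by simp),
    abs_of_nonneg (Finset.sum_nonneg fun _ _ => pow_nonneg hz0 _), Finset.cast_card]
  exact Finset.sum_le_sum fun _ _ => pow_le_one₀ hz0 hz1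

/-- A primitive of the generating function: `∑ E[F_k ^ 2] t ^ (k+1) / (k+1)!`. -/
noncomputable def egfPrimitive (w t : ℝ) : ℝ :=
  ∑' k : ℕ, gaussE (pathPoly w k ^ 2) * t ^ (k + 1) / (k + 1).factorial

theorem norm_term_le (z r t : ℝ) (hz0 : 0 ≤ z) (hz1 : z ≤ 1) (ht : |t| ≤ r) (k : ℕ) :
    ‖gaussE (pathPoly (1 - z) k ^ 2) * t ^ k / k.factorial‖ ≤ ballot 0 k * r ^ k := by
  rw [norm_div, norm_mul, norm_pow, Real.norm_eq_abs, Real.norm_eq_abs,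
    Real.norm_of_nonneg (by positivity : (0 : ℝ) ≤ k.factorial), ballot_zero_eq,
    div_mul_eq_mul_div]
  gcongr
  exact abs_gaussE_sq_le z hz0 hz1 k

theorem hasDerivAt_egfPrimitive (z r t : ℝ) (hz0 : 0 ≤ z) (hz1 : z ≤ 1) (hr : r < 1 / 2)
    (ht : |t| < r) : HasDerivAt (egfPrimitive (1 - z))
      (∑' k : ℕ, gaussE (pathPoly (1 - z) k ^ 2) * t ^ k / k.factorial) t := by
  have hr0 : 0 < r := (abs_nonneg t).trans_lt ht
  refine hasDerivAt_tsum_of_isPreconnected (t := Set.Ioo (-r) r) (y₀ := 0)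
    (g := fun k t => gaussE (pathPoly (1 - z) k ^ 2) * t ^ (k + 1) / (k + 1).factorial)
    (g' := fun k t => gaussE (pathPoly (1 - z) k ^ 2) * t ^ k / k.factorial)
    (hasSum_ballot_zero r hr0.le hr).summable isOpen_Ioo isPreconnected_Ioo ?_ ?_
    ⟨by linarith, hr0⟩ ?_ (abs_lt.mp ht)
  · intro k x _
    have h := ((hasDerivAt_pow (k + 1) x).const_mul
      (gaussE (pathPoly (1 - z) k ^ 2))).div_const ((k + 1).factorial : ℝ)
    refine h.congr_deriv ?_
    rw [Nat.factorial_succ, Nat.add_sub_cancel]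
    push_cast
    field_simp
  · intro k x hx
    exact norm_term_le z r x hz0 hz1 (abs_lt.mpr hx).le k
  · simp

/-- The recurrence for `E[F_k ^ 2]`, summed. -/
theorem hasSum_egf (z t : ℝ) (hz0 : 0 ≤ z) (hz1 : z ≤ 1) (ht0 : 0 ≤ t) (ht : t < 1 / 2) :
    HasSum (fun k : ℕ => gaussE (pathPoly (1 - z) k ^ 2) * t ^ k / k.factorial)
      (Real.exp ((√(1 - 2 * t) - 1) * (1 - z)) / √(1 - 2 * t)
        + (1 - z) * egfPrimitive (1 - z) t) := by
  have hG : Summable fun k : ℕ => gaussE (pathPoly (1 - z) k ^ 2) * t ^ k / k.factorial :=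
    Summable.of_norm_bounded (hasSum_ballot_zero t ht0 ht).summable
      (norm_term_le z t t hz0 hz1 (abs_of_nonneg ht0).le)
  have hS : HasSum (fun k : ℕ => gaussE (pathPoly (1 - z) k ^ 2) * t ^ (k + 1) /
      (k + 1).factorial) (egfPrimitive (1 - z) t) := by
    refine Summable.hasSum (Summable.of_norm_bounded (hG.norm.mul_left t) fun k => ?_)
    rw [norm_div, norm_mul, norm_div, norm_mul, norm_pow, norm_pow, Real.norm_of_nonneg ht0,
      Real.norm_of_nonneg (by positivity : (0 : ℝ) ≤ (k + 1).factorial),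
      Real.norm_of_nonneg (by positivity : (0 : ℝ) ≤ k.factorial), mul_div_assoc']
    rw [pow_succ t k, show t * (‖gaussE (pathPoly (1 - z) k ^ 2)‖ * t ^ k) =
      ‖gaussE (pathPoly (1 - z) k ^ 2)‖ * (t ^ k * t) by ring]
    gcongr
    omega
  have hB := (hasSum_nat_add_iff' 1).mpr (hasSum_path (1 - z) t (by linarith) ht0 ht)
  rw [← hasSum_nat_add_iff' 1]
  have h := hB.add (hS.mul_left (1 - z))
  convert h using 1
  · ext k
    rw [gaussE_sq_succ]
    ring
  · simp [pathPoly]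
    ring

/-- The closed form of `egfPrimitive`. -/
noncomputable def closedPrimitive (w t : ℝ) : ℝ :=
  Real.exp ((t - 2) * w) * ∫ u in (√(1 - 2 * t) + 1)..2, Real.exp (w * u ^ 2 / 2)

theorem hasDerivAt_closedPrimitive (w t : ℝ) (ht : t < 1 / 2) :
    HasDerivAt (closedPrimitive w)
      (w * closedPrimitive w t + Real.exp ((√(1 - 2 * t) - 1) * w) / √(1 - 2 * t)) t := by
  have hpos : 0 < 1 - 2 * t := by linarith
  have hs : √(1 - 2 * t) ≠ 0 := (Real.sqrt_pos.mpr hpos).ne'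
  have hs2 : √(1 - 2 * t) ^ 2 = 1 - 2 * t := Real.sq_sqrt hpos.le
  have h1 : HasDerivAt (fun t : ℝ => √(1 - 2 * t) + 1) (-1 / √(1 - 2 * t)) t := by
    have h := ((((hasDerivAt_id t).const_mul 2).const_sub 1).sqrt hpos.ne').add_const 1
    refine h.congr_deriv ?_
    simp only [id]
    field_simp
  have hc : Continuous fun u : ℝ => Real.exp (w * u ^ 2 / 2) := by fun_prop
  have h2 : HasDerivAt (fun x : ℝ => ∫ u in x..2, Real.exp (w * u ^ 2 / 2))
      (-Real.exp (w * (√(1 - 2 * t) + 1) ^ 2 / 2)) (√(1 - 2 * t) + 1) :=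
    intervalIntegral.integral_hasDerivAt_left (hc.intervalIntegrable _ _)
      hc.aestronglyMeasurable.stronglyMeasurableAtFilter hc.continuousAt
  have h3 := h2.comp t h1
  have h4 : HasDerivAt (fun t : ℝ => Real.exp ((t - 2) * w)) (Real.exp ((t - 2) * w) * w) t := by
    have h := (((hasDerivAt_id t).sub_const 2).mul_const w).exp
    simpa using h
  refine (h4.mul h3).congr_deriv ?_
  -- `(s + 1) ^ 2 / 2 = 1 - t + s` for `s = √(1 - 2t)`
  have e : Real.exp ((√(1 - 2 * t) - 1) * w) =
      Real.exp ((t - 2) * w) * Real.exp (w * (√(1 - 2 * t) + 1) ^ 2 / 2) := by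
    rw [← Real.exp_add]
    congr 1
    rw [add_sq, hs2]
    ring
  rw [e, closedPrimitive]
  simp only [Function.comp]
  field_simp

/-- Both primitives solve `f' = w f + exp (w (s - 1)) / s` with `f 0 = 0`. -/
theorem egfPrimitive_eq (z y : ℝ) (hz0 : 0 ≤ z) (hz1 : z ≤ 1) (hy0 : 0 ≤ y) (hy : y < 1 / 2) :
    egfPrimitive (1 - z) y = closedPrimitive (1 - z) y := by
  set w := 1 - z with hw
  set φ : ℝ → ℝ := fun t => (egfPrimitive w t - closedPrimitive w t) * Real.exp (-(w * t)) with hφ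
  have hder : ∀ t ∈ Set.Icc 0 y, HasDerivAt φ 0 t := by
    intro t ht
    have ht2 : t < 1 / 2 := ht.2.trans_lt hy
    have h1 := hasDerivAt_egfPrimitive z ((t + 1 / 2) / 2) t hz0 hz1 (by linarith)
      (by rw [abs_of_nonneg ht.1]; linarith)
    rw [(hasSum_egf z t hz0 hz1 ht.1 ht2).tsum_eq] at h1
    have h2 := hasDerivAt_closedPrimitive w t ht2
    have h3 : HasDerivAt (fun t : ℝ => Real.exp (-(w * t))) (Real.exp (-(w * t)) * -w) t := by
      have h := ((hasDerivAt_id t).const_mul w).neg.exp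
      simpa using h
    refine ((h1.sub h2).mul h3).congr_deriv ?_
    simp only [Pi.sub_apply, ← hw]
    ring
  have hconst := constant_of_has_deriv_right_zero (f := φ) (a := 0) (b := y)
    (fun t ht => (hder t ht).continuousAt.continuousWithinAt)
    (fun t ht => (hder t ⟨ht.1, ht.2.le⟩).hasDerivWithinAt) y ⟨hy0, le_rfl⟩
  have h0 : φ 0 = 0 := by
    have e1 : egfPrimitive w 0 = 0 := by simp [egfPrimitive]
    have e2 : closedPrimitive w 0 = 0 := by
      simp only [closedPrimitive, mul_zero, sub_zero, Real.sqrt_one]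
      rw [show (1 : ℝ) + 1 = 2 by norm_num, intervalIntegral.integral_same, mul_zero]
    simp [hφ, e1, e2]
  rw [h0] at hconst
  exact sub_eq_zero.mp ((mul_eq_zero.mp hconst).resolve_right (Real.exp_ne_zero _))

/-- The closed form in terms of `erfi`, by the substitution `t = √w / √2 * u`. -/
theorem closedPrimitive_eq_erfi (w y : ℝ) (hw : 0 ≤ w) :
    w * closedPrimitive w y =
      -(Real.exp ((y - 2) * w) * √(Real.pi / 2) * √w *
        (erfi ((√(1 - 2 * y) + 1) * √w / √2) - erfi (√2 * √w))) := by
  set s := √(1 - 2 * y) with hs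
  have hintegrable : ∀ a b : ℝ, IntervalIntegrable (fun t : ℝ => Real.exp (t ^ 2))
      MeasureTheory.volume a b := fun a b =>
    (by fun_prop : Continuous fun t : ℝ => Real.exp (t ^ 2)).intervalIntegrable a b
  have h22 : √2 * √2 = (2 : ℝ) := Real.mul_self_sqrt (by norm_num)
  have hww : √w * √w = w := Real.mul_self_sqrt hw
  have h2 : √(2 : ℝ) ≠ 0 := by positivity
  have hpi : √Real.pi ≠ 0 := (Real.sqrt_pos.mpr Real.pi_pos).ne'
  have hsub := intervalIntegral.mul_integral_comp_mul_left (a := 2) (b := s + 1)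
    (f := fun t : ℝ => Real.exp (t ^ 2)) (√w / √2)
  have ea : √w / √2 * 2 = √2 * √w := by
    rw [div_mul_eq_mul_div, div_eq_iff h2, mul_right_comm, h22, mul_comm]
  have eb : √w / √2 * (s + 1) = (s + 1) * √w / √2 := by ring
  have ef : ∀ u : ℝ, Real.exp ((√w / √2 * u) ^ 2) = Real.exp (w * u ^ 2 / 2) := by
    intro u
    congr 1
    rw [mul_pow, div_pow, pow_two, pow_two √2, hww, h22]
    ring
  simp only [ef] at hsub
  rw [ea, eb] at hsub
  have hdiff : erfi ((s + 1) * √w / √2) - erfi (√2 * √w) =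
      2 / √Real.pi * (√w / √2 * ∫ u in (2 : ℝ)..(s + 1), Real.exp (w * u ^ 2 / 2)) := by
    rw [erfi, erfi, ← mul_sub, intervalIntegral.integral_interval_sub_left (hintegrable _ _) (hintegrable _ _),
      hsub]
  rw [hdiff, closedPrimitive, ← hs, intervalIntegral.integral_symm, Real.sqrt_div Real.pi_pos.le]
  generalize (∫ u in (2 : ℝ)..(s + 1), Real.exp (w * u ^ 2 / 2)) = J
  generalize Real.exp ((y - 2) * w) = E
  have : E * (√Real.pi / √2) * √w * (2 / √Real.pi * (√w / √2 * J)) =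
      E * J * (√w * √w) * (2 / (√2 * √2)) := by
    field_simp
  rw [this, hww, h22]
  ring

end Equation

open Real in
/-- For `0 ≤ y < 1/2` and `0 ≤ z ≤ 1`, the exponential generating
function `Σ_k (Σ_{h,v} D_{k,v,h} z^h) y^k / k!` converges to
`e^{(√(1-2y)-1)(1-z)}/√(1-2y) - e^{(y-2)(1-z)} √(π/2) √(1-z)
   (erfi((√(1-2y)+1)√(1-z)/√2) - erfi(√2 √(1-z)))`. -/
theorem horizontal_egf (y z : ℝ) (hy0 : 0 ≤ y) (hy : y < 1 / 2) (hz0 : 0 ≤ z)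
    (hz1 : z ≤ 1) :
    HasSum
      (fun k : ℕ => (∑ᶠ h : ℕ, (∑ᶠ v : ℕ, (D k v h : ℝ)) * z ^ h) * y ^ k / k.factorial)
      (Real.exp ((Real.sqrt (1 - 2 * y) - 1) * (1 - z)) / Real.sqrt (1 - 2 * y)
        - Real.exp ((y - 2) * (1 - z)) * Real.sqrt (π / 2) * Real.sqrt (1 - z) *
          (erfi ((Real.sqrt (1 - 2 * y) + 1) * Real.sqrt (1 - z) / Real.sqrt 2)
            - erfi (Real.sqrt 2 * Real.sqrt (1 - z)))) := by
  simp_rw [finsum_D_eq, sum_horiz_eq]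
  have h := hasSum_egf z y hz0 hz1 hy0 hy
  rwa [egfPrimitive_eq z y hz0 hz1 hy0 hy, closedPrimitive_eq_erfi _ _ (by linarith),
    ← sub_eq_add_neg] at h
end
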